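/- Let p > 2 and let Ω ≠ ℝ^N be an arbitrary domain of ℝ^N. Assume p − 1 < λ < ∞ if N ≤ p(p+3)/(p−1), and p − 1 < λ < Λ_c(N, p) if N > p(p+3)/(p−1). Then there exists a constant C = C(p, N, λ) > 0, independent of Ω and u, such that every stable C^1 weak solution u of −Δ_p u = |u|^{λ−1} u on Ω satisfies |u(x)| + |∇u(x)|^{p/(λ+1)} ≤ C · dist(x, ∂Ω)^{−p/(λ+1−p)} for all x ∈ Ω. -/

import Mathlib

/-!
Both the equation and the stability inequality are tested with powers of `u` times a cutoff `η`.
Their combination bounds `∫ |u| ^ (λ + γ)` by a multiple of `∫ |∇η| ^ q`, where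
`q = p (λ + γ) / (λ + 1 - p)`, for every `γ` up to a threshold depending on `p` and `λ`; the upper
bound on `λ` is what allows `q > N` for some admissible `γ`. Hence a stable solution with bounded
gradient on a huge ball is small near the centre. So is its gradient: the difference quotients of
`u` solve a linearised equation which is uniformly elliptic wherever they exceed a positive level,
and De Giorgi's iteration bounds them there by the integral of `|∇u| ^ p`, which is small by
Caccioppoli's inequality.

Finally `|u| ^ ((λ + 1 - p) / p) + |∇u| ^ ((λ + 1 - p) / (λ + 1))` scales like an inverse length. If
its product with the distance to the boundary were large at some point, doubling and rescaling would
yield a stable solution on a huge ball for which this quantity is at most `2` everywhere and equal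
to `1` at the centre, contradicting the smallness just obtained.
-/

open MeasureTheory Metric
open scoped RealInnerProductSpace

/-- The critical exponent `Λ_c(N, p)`. -/
noncomputable def LambdaC (N : ℕ) (p : ℝ) : ℝ :=
  (((p - 1) * N - p) ^ 2 + p ^ 2 * (p - 2) - p ^ 2 * (p - 1) * N +
      2 * p ^ 2 * Real.sqrt ((p - 1) * (N - 1))) /
    ((N - p) * ((p - 1) * N - p * (p + 3)))

namespace PLaplace

open Set Filter Topology Module
open scoped Gradient

section Gradient

variable {E : Type*} [NormedAddCommGroup E] [InnerProductSpace ℝ E] [CompleteSpace E]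
  {v η : E → ℝ} {x : E}

lemma norm_gradient (v : E → ℝ) (x : E) : ‖∇ v x‖ = ‖fderiv ℝ v x‖ :=
  LinearIsometryEquiv.norm_map _ _

lemma continuous_gradient (hv : ContDiff ℝ 1 v) : Continuous (∇ v) :=
  (LinearIsometryEquiv.continuous _).comp (hv.continuous_fderiv one_ne_zero)

lemma continuous_norm_rpow_smul_gradient (hv : ContDiff ℝ 1 v) {p : ℝ} (hp : 2 ≤ p) :
    Continuous fun x => ‖∇ v x‖ ^ (p - 2) • ∇ v x :=
  ((continuous_gradient hv).norm.rpow_const fun _ => Or.inr (sub_nonneg.2 hp)).smul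
    (continuous_gradient hv)

lemma gradient_eq_zero_of_notMem_tsupport (hx : x ∉ tsupport v) : ∇ v x = 0 := by
  rw [← norm_eq_zero, norm_gradient, norm_eq_zero]
  exact Function.notMem_support.1 fun h => hx (support_fderiv_subset ℝ h)

lemma gradient_comp_mul_pow {F : ℝ → ℝ} {F' : ℝ} (hv : DifferentiableAt ℝ v x)
    (hF : HasDerivAt F F' (v x)) (hη : DifferentiableAt ℝ η x) (n : ℕ) :
    ∇ (fun y => F (v y) * η y ^ n) x =
      (F' * η x ^ n) • ∇ v x + (F (v x) * (n * η x ^ (n - 1))) • ∇ η x := by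
  refine HasGradientAt.gradient (hasGradientAt_iff_hasFDerivAt.2 ?_)
  refine ((hF.comp_hasFDerivAt x hv.hasFDerivAt).mul
    ((hasDerivAt_pow n (η x)).comp_hasFDerivAt x hη.hasFDerivAt)).congr_fderiv ?_
  ext y
  simp
  ring

lemma gradient_const_mul_comp_add_smul (hv : Differentiable ℝ v) (c s : ℝ) (y x : E) :
    ∇ (fun z => c * v (y + s • z)) x = (c * s) • ∇ v (y + s • x) := by
  refine HasGradientAt.gradient (hasGradientAt_iff_hasFDerivAt.2 ?_)
  have hinner : HasFDerivAt (fun z : E => y + s • z) (s • ContinuousLinearMap.id ℝ E) x :=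
    ((hasFDerivAt_id x).const_smul s).const_add y
  refine (((hv (y + s • x)).hasFDerivAt.comp x hinner).const_mul c).congr_fderiv ?_
  ext z
  simp [mul_assoc]

lemma gradient_fun_sub {w : E → ℝ} (hv : DifferentiableAt ℝ v x) (hw : DifferentiableAt ℝ w x) :
    ∇ (fun y => v y - w y) x = ∇ v x - ∇ w x :=
  HasGradientAt.gradient <| hasGradientAt_iff_hasFDerivAt.2 <| by
    rw [map_sub]
    exact hv.hasGradientAt.hasFDerivAt.sub hw.hasGradientAt.hasFDerivAt

lemma gradient_eq_of_eqOn {w : E → ℝ} {U : Set E} (hU : IsOpen U) (h : EqOn v w U) (hx : x ∈ U) :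
    ∇ v x = ∇ w x :=
  (h.eventuallyEq_of_mem (hU.mem_nhds hx)).gradient_eq

end Gradient

section SignedPower

variable {s : ℝ}

/-- The odd power `|t|^s t`; the right-hand side of the equation is `signedPow (λ - 1) u`. -/
noncomputable def signedPow (s t : ℝ) : ℝ := |t| ^ s * t

lemma continuous_signedPow (hs : 0 ≤ s) : Continuous (signedPow s) :=
  (continuous_abs.rpow_const fun _ => Or.inr hs).mul continuous_id

lemma abs_signedPow (hs : 0 ≤ s) (t : ℝ) : |signedPow s t| = |t| ^ (s + 1) := by
  rw [signedPow, abs_mul, abs_of_nonneg (by positivity),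
    Real.rpow_add_one' (abs_nonneg t) (by linarith)]

lemma hasDerivAt_signedPow (hs : 0 ≤ s) (t : ℝ) :
    HasDerivAt (signedPow s) ((s + 1) * |t| ^ s) t := by
  have hcont : Continuous fun t : ℝ => (s + 1) * |t| ^ s :=
    continuous_const.mul (continuous_abs.rpow_const fun _ => Or.inr hs)
  refine hasDerivAt_of_hasDerivAt_of_ne' (x := 0) (fun t ht => ?_)
    (continuous_signedPow hs).continuousAt hcont.continuousAt t
  have hsplit : |t| ^ s = |t| ^ (s - 1) * |t| := by
    rw [← Real.rpow_add_one (abs_ne_zero.2 ht), sub_add_cancel]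
  refine (((hasDerivAt_abs ht).rpow_const (Or.inl (abs_ne_zero.2 ht))).mul
    (hasDerivAt_id t)).congr_deriv ?_
  rw [id_eq, mul_one, add_mul, one_mul, hsplit, ← sign_mul_self]
  ring

lemma contDiff_signedPow (hs : 0 ≤ s) : ContDiff ℝ 1 (signedPow s) := by
  refine contDiff_one_iff_deriv.2 ⟨fun t => (hasDerivAt_signedPow hs t).differentiableAt, ?_⟩
  rw [funext fun t => (hasDerivAt_signedPow hs t).deriv]
  exact continuous_const.mul (continuous_abs.rpow_const fun _ => Or.inr hs)

lemma abs_signedPow_sub_le {M a b : ℝ} (hs : 0 ≤ s) (ha : |a| ≤ M) (hb : |b| ≤ M) :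
    |signedPow s a - signedPow s b| ≤ (s + 1) * M ^ s * |a - b| := by
  refine (convex_Icc (-M) M).norm_image_sub_le_of_norm_hasDerivWithin_le
    (fun t _ => (hasDerivAt_signedPow hs t).hasDerivWithinAt) (fun t ht => ?_)
    (abs_le.1 hb) (abs_le.1 ha)
  have htM : |t| ≤ M := abs_le.2 ht
  rw [Real.norm_of_nonneg (by positivity)]
  gcongr

end SignedPower

section PositivePart

lemma hasDerivAt_max_zero_pow {n : ℕ} (hn : n ≠ 0) (t : ℝ) :
    HasDerivAt (fun t : ℝ => max t 0 ^ (n + 1)) ((n + 1) * max t 0 ^ n) t := by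
  have hpow : Continuous fun t : ℝ => max t 0 ^ (n + 1) := by fun_prop
  have hder : Continuous fun t : ℝ => ((n : ℝ) + 1) * max t 0 ^ n := by fun_prop
  refine hasDerivAt_of_hasDerivAt_of_ne' (x := 0) (fun t ht => ?_) hpow.continuousAt
    hder.continuousAt t
  rcases ht.lt_or_gt with hneg | hpos
  · rw [max_eq_right hneg.le, zero_pow hn, mul_zero]
    refine (hasDerivAt_const t (0 : ℝ)).congr_of_eventuallyEq ?_
    filter_upwards [gt_mem_nhds hneg] with y hy
    rw [max_eq_right hy.le, zero_pow n.succ_ne_zero]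
  · rw [max_eq_left hpos.le]
    refine ((hasDerivAt_pow (n + 1) t).congr_of_eventuallyEq ?_).congr_deriv (by simp)
    filter_upwards [lt_mem_nhds hpos] with y hy
    rw [max_eq_left hy.le]

lemma contDiff_max_zero_pow {n : ℕ} (hn : n ≠ 0) :
    ContDiff ℝ 1 fun t : ℝ => max t 0 ^ (n + 1) := by
  refine contDiff_one_iff_deriv.2 ⟨fun t => (hasDerivAt_max_zero_pow hn t).differentiableAt, ?_⟩
  rw [funext fun t => (hasDerivAt_max_zero_pow hn t).deriv]
  fun_prop

end PositivePart

section VectorInequalities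

variable {E : Type*} [NormedAddCommGroup E] [InnerProductSpace ℝ E]

lemma half_norm_rpow_mul_sq_le_inner {r : ℝ} (hr : 0 ≤ r) (P Q : E) :
    1 / 2 * ‖Q‖ ^ r * ‖P - Q‖ ^ 2 ≤ ⟪‖P‖ ^ r • P - ‖Q‖ ^ r • Q, P - Q⟫ := by
  have hexpand : ⟪‖P‖ ^ r • P - ‖Q‖ ^ r • Q, P - Q⟫ =
      1 / 2 * (‖P‖ ^ r + ‖Q‖ ^ r) * ‖P - Q‖ ^ 2 +
        1 / 2 * ((‖P‖ ^ r - ‖Q‖ ^ r) * (‖P‖ ^ 2 - ‖Q‖ ^ 2)) := by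
    rw [norm_sub_sq_real]
    simp only [inner_sub_left, inner_sub_right, real_inner_smul_left, real_inner_self_eq_norm_sq]
    rw [real_inner_comm P Q]
    ring
  have hmono : 0 ≤ (‖P‖ ^ r - ‖Q‖ ^ r) * (‖P‖ ^ 2 - ‖Q‖ ^ 2) := by
    rcases le_total ‖P‖ ‖Q‖ with h | h
    · exact mul_nonneg_of_nonpos_of_nonpos (sub_nonpos.2 (by gcongr)) (sub_nonpos.2 (by gcongr))
    · exact mul_nonneg (sub_nonneg.2 (by gcongr)) (sub_nonneg.2 (by gcongr))
  rw [hexpand]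
  have : 0 ≤ ‖P‖ ^ r * ‖P - Q‖ ^ 2 := by positivity
  linarith

lemma abs_rpow_sub_rpow_mul_le {r a b : ℝ} (hr : 0 ≤ r) (ha : 0 ≤ a) (hb : 0 ≤ b) :
    |a ^ r - b ^ r| * b ≤ |signedPow r a - signedPow r b| := by
  rw [signedPow, signedPow, abs_of_nonneg ha, abs_of_nonneg hb]
  have har : 0 ≤ a ^ r := by positivity
  rcases le_total a b with h | h
  · have hab : a ^ r ≤ b ^ r := by gcongr
    rw [abs_of_nonpos (sub_nonpos.2 hab)]
    exact le_trans (by nlinarith) (neg_le_abs _)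
  · have hba : b ^ r ≤ a ^ r := by gcongr
    rw [abs_of_nonneg (sub_nonneg.2 hba)]
    exact le_trans (by nlinarith) (le_abs_self _)

lemma norm_norm_rpow_smul_sub_le {r K : ℝ} (hr : 0 ≤ r) {P Q : E} (hP : ‖P‖ ≤ K)
    (hQ : ‖Q‖ ≤ K) :
    ‖‖P‖ ^ r • P - ‖Q‖ ^ r • Q‖ ≤ (r + 2) * K ^ r * ‖P - Q‖ := by
  have hK : 0 ≤ K := (norm_nonneg P).trans hP
  have hsplit : ‖P‖ ^ r • P - ‖Q‖ ^ r • Q = ‖P‖ ^ r • (P - Q) + (‖P‖ ^ r - ‖Q‖ ^ r) • Q := by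
    rw [smul_sub, sub_smul]
    abel
  have hscalar : |‖P‖ ^ r - ‖Q‖ ^ r| * ‖Q‖ ≤ (r + 1) * K ^ r * ‖P - Q‖ := calc
    _ ≤ |signedPow r ‖P‖ - signedPow r ‖Q‖| :=
      abs_rpow_sub_rpow_mul_le hr (norm_nonneg P) (norm_nonneg Q)
    _ ≤ (r + 1) * K ^ r * |‖P‖ - ‖Q‖| :=
      abs_signedPow_sub_le hr (by rwa [abs_norm]) (by rwa [abs_norm])
    _ ≤ (r + 1) * K ^ r * ‖P - Q‖ := by
      gcongr
      exact abs_norm_sub_norm_le P Q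
  calc ‖‖P‖ ^ r • P - ‖Q‖ ^ r • Q‖
      ≤ ‖P‖ ^ r * ‖P - Q‖ + |‖P‖ ^ r - ‖Q‖ ^ r| * ‖Q‖ := by
        rw [hsplit]
        refine (norm_add_le _ _).trans_eq ?_
        rw [norm_smul, norm_smul, Real.norm_of_nonneg (by positivity : 0 ≤ ‖P‖ ^ r),
          Real.norm_eq_abs]
    _ ≤ K ^ r * ‖P - Q‖ + (r + 1) * K ^ r * ‖P - Q‖ := by gcongr
    _ = (r + 2) * K ^ r * ‖P - Q‖ := by ring

lemma norm_rpow_mul_inner_sq_le (p : ℝ) (P Q : E) :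
    ‖P‖ ^ (p - 4) * ⟪P, Q⟫ ^ 2 ≤ ‖P‖ ^ (p - 2) * ‖Q‖ ^ 2 := by
  rcases eq_or_ne P 0 with rfl | hP
  · simp only [inner_zero_left, zero_pow two_ne_zero, mul_zero]
    positivity
  · have hsplit : ‖P‖ ^ (p - 2) = ‖P‖ ^ (p - 4) * ‖P‖ ^ 2 := by
      rw [← Real.rpow_add_natCast (norm_ne_zero_iff.2 hP)]
      congr 1
      push_cast
      ring
    rw [hsplit, mul_assoc, ← mul_pow, ← sq_abs ⟪P, Q⟫]
    gcongr
    exact abs_real_inner_le_norm P Q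

end VectorInequalities

section TestFunctions

variable {E : Type*} [NormedAddCommGroup E] [NormedSpace ℝ E] {U V : Set E} {φ : E → ℝ}

/-- A `C¹` test function: compactly supported, with support inside `U`. -/
structure IsTestFunction (U : Set E) (φ : E → ℝ) : Prop where
  contDiff : ContDiff ℝ 1 φ
  hasCompactSupport : HasCompactSupport φ
  tsupport_subset : tsupport φ ⊆ U

namespace IsTestFunction

lemma mono (hφ : IsTestFunction U φ) (h : U ⊆ V) : IsTestFunction V φ :=
  ⟨hφ.contDiff, hφ.hasCompactSupport, hφ.tsupport_subset.trans h⟩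

lemma mul_left {f : E → ℝ} (hφ : IsTestFunction U φ) (hf : ContDiff ℝ 1 f) :
    IsTestFunction U fun x => f x * φ x where
  contDiff := hf.mul hφ.contDiff
  hasCompactSupport := hφ.hasCompactSupport.mul_left
  tsupport_subset := tsupport_mul_subset_right.trans hφ.tsupport_subset

lemma pow (hφ : IsTestFunction U φ) {n : ℕ} (hn : n ≠ 0) : IsTestFunction U fun x => φ x ^ n := by
  obtain ⟨k, rfl⟩ := Nat.exists_eq_succ_of_ne_zero hn
  simpa only [pow_succ] using hφ.mul_left (hφ.contDiff.pow k)

lemma differentiableAt (hφ : IsTestFunction U φ) (x : E) : DifferentiableAt ℝ φ x :=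
  hφ.contDiff.differentiable one_ne_zero x

end IsTestFunction

end TestFunctions

lemma integrable_of_eq_zero_off_tsupport {X : Type*} [TopologicalSpace X] [R1Space X]
    [MeasurableSpace X] [OpensMeasurableSpace X] {μ : Measure X} [IsFiniteMeasureOnCompacts μ]
    {f φ : X → ℝ} (hf : Continuous f) (hφ : HasCompactSupport φ) (h : ∀ x ∉ tsupport φ, f x = 0) :
    Integrable f μ :=
  hf.integrable_of_hasCompactSupport (HasCompactSupport.intro hφ h)

section StabilityDensity

variable {E : Type*} [NormedAddCommGroup E] [InnerProductSpace ℝ E] [CompleteSpace E]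
  {p lam : ℝ} {u φ : E → ℝ} {x : E}

/-- The density of the quadratic form `L_u(φ, φ)`. -/
noncomputable def stabilityDensity (p lam : ℝ) (u φ : E → ℝ) (x : E) : ℝ :=
  ‖∇ u x‖ ^ (p - 2) * ‖∇ φ x‖ ^ 2 +
    ((p - 2) * ‖∇ u x‖ ^ (p - 4) * ⟪∇ u x, ∇ φ x⟫ ^ 2 - lam * |u x| ^ (lam - 1) * φ x ^ 2)

lemma stabilityDensity_eq_zero (hx : x ∉ tsupport φ) : stabilityDensity p lam u φ x = 0 := by
  simp [stabilityDensity, gradient_eq_zero_of_notMem_tsupport hx,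
    image_eq_zero_of_notMem_tsupport hx]

end StabilityDensity

section WeakSolutions

variable {E : Type*} [NormedAddCommGroup E] [InnerProductSpace ℝ E] [FiniteDimensional ℝ E]
  [MeasurableSpace E] [BorelSpace E] {p lam : ℝ} {u v : E → ℝ} {U V : Set E} {φ : E → ℝ}

/-- `u` is a weak solution of `-Δ_p u = |u|^(λ-1) u` on `Ω`. -/
def IsWeakSolution (p lam : ℝ) (u : E → ℝ) (Ω : Set E) : Prop :=
  ∀ φ : E → ℝ, ContDiff ℝ (⊤ : ℕ∞) φ → HasCompactSupport φ → tsupport φ ⊆ Ω →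
    ∫ x in Ω, ‖∇ u x‖ ^ (p - 2) * ⟪∇ u x, ∇ φ x⟫ = ∫ x in Ω, |u x| ^ (lam - 1) * u x * φ x

/-- `u` is stable on `Ω`: the quadratic form `L_u` is nonnegative on `C¹` test functions. -/
def IsStable (p lam : ℝ) (u : E → ℝ) (Ω : Set E) : Prop :=
  ∀ φ : E → ℝ, ContDiff ℝ 1 φ → HasCompactSupport φ → tsupport φ ⊆ Ω →
    0 ≤ ∫ x in Ω, stabilityDensity p lam u φ x

lemma isWeakSolution_iff :
    IsWeakSolution p lam u U ↔
      ∀ φ : E → ℝ, ContDiff ℝ (⊤ : ℕ∞) φ → HasCompactSupport φ → tsupport φ ⊆ U →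
        ∫ x, ⟪‖∇ u x‖ ^ (p - 2) • ∇ u x, ∇ φ x⟫ = ∫ x, signedPow (lam - 1) (u x) * φ x := by
  refine forall₄_congr fun φ _ _ hφU => ?_
  rw [setIntegral_eq_integral_of_forall_compl_eq_zero fun x hx => ?_,
    setIntegral_eq_integral_of_forall_compl_eq_zero fun x hx => ?_]
  · simp only [real_inner_smul_left, signedPow]
  · rw [image_eq_zero_of_notMem_tsupport fun h => hx (hφU h), mul_zero]
  · rw [gradient_eq_zero_of_notMem_tsupport fun h => hx (hφU h), inner_zero_right, mul_zero]

lemma isStable_iff :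
    IsStable p lam u U ↔ ∀ φ, IsTestFunction U φ → 0 ≤ ∫ x, stabilityDensity p lam u φ x := by
  refine ⟨fun h φ hφ => ?_, fun h φ hφ hc hs => ?_⟩
  · refine (h φ hφ.contDiff hφ.hasCompactSupport hφ.tsupport_subset).trans_eq ?_
    exact setIntegral_eq_integral_of_forall_compl_eq_zero fun x hx =>
      stabilityDensity_eq_zero fun h => hx (hφ.tsupport_subset h)
  · refine (h φ ⟨hφ, hc, hs⟩).trans_eq ?_
    exact (setIntegral_eq_integral_of_forall_compl_eq_zero fun x hx =>
      stabilityDensity_eq_zero fun h => hx (hs h)).symm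

lemma IsWeakSolution.congr_of_subset (hu : IsWeakSolution p lam u U) (hV : IsOpen V)
    (hVU : V ⊆ U) (h : EqOn v u V) : IsWeakSolution p lam v V := by
  refine isWeakSolution_iff.2 fun φ hφ hc hs => ?_
  convert isWeakSolution_iff.1 hu φ hφ hc (hs.trans hVU) using 3 with x x
  all_goals by_cases hx : x ∈ tsupport φ
  · rw [gradient_eq_of_eqOn hV h (hs hx)]
  · simp only [gradient_eq_zero_of_notMem_tsupport hx, inner_zero_right]
  · rw [h (hs hx)]
  · simp only [image_eq_zero_of_notMem_tsupport hx, mul_zero]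

lemma IsStable.congr_of_subset (hu : IsStable p lam u U) (hV : IsOpen V) (hVU : V ⊆ U)
    (h : EqOn v u V) : IsStable p lam v V := by
  refine isStable_iff.2 fun φ hφ => (isStable_iff.1 hu φ (hφ.mono hVU)).trans_eq
    (integral_congr_ae (Eventually.of_forall fun x => ?_))
  by_cases hx : x ∈ tsupport φ
  · have hxV := hφ.tsupport_subset hx
    simp only [stabilityDensity, gradient_eq_of_eqOn hV h hxV, h hxV]
  · simp only [stabilityDensity_eq_zero hx]

/-- A stable weak solution on `U` that is moreover defined and `C¹` on the whole space. -/
structure IsStableSolution (p lam : ℝ) (v : E → ℝ) (U : Set E) : Prop where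
  contDiff : ContDiff ℝ 1 v
  isWeakSolution : IsWeakSolution p lam v U
  isStable : IsStable p lam v U

lemma IsStableSolution.mono (hv : IsStableSolution p lam v U) (hVU : V ⊆ U) :
    IsStableSolution p lam v V :=
  ⟨hv.contDiff, isWeakSolution_iff.2 fun φ hφ hc hs =>
    isWeakSolution_iff.1 hv.isWeakSolution φ hφ hc (hs.trans hVU),
    isStable_iff.2 fun φ hφ => isStable_iff.1 hv.isStable φ (hφ.mono hVU)⟩

lemma exists_isStableSolution_eq_near {Ω : Set E} {x₀ : E} {R : ℝ} (hΩ : IsOpen Ω) (hR : 0 < R)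
    (hball : ball x₀ (2 * R) ⊆ Ω) (hu : ContDiffOn ℝ 1 u Ω) (hW : IsWeakSolution p lam u Ω)
    (hS : IsStable p lam u Ω) :
    ∃ w, IsStableSolution p lam w (ball x₀ R) ∧ w x₀ = u x₀ ∧ ∇ w x₀ = ∇ u x₀ := by
  let χ : ContDiffBump x₀ := ⟨R, 3 / 2 * R, hR, by linarith⟩
  have hχΩ : tsupport χ ⊆ Ω := by
    rw [χ.tsupport_eq]
    exact (closedBall_subset_ball (by change 3 / 2 * R < 2 * R; linarith)).trans hball
  have hRΩ : ball x₀ R ⊆ Ω := (ball_subset_ball (by linarith)).trans hball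
  have hcont : ContDiff ℝ 1 fun x => χ x * u x := by
    refine contDiff_iff_contDiffAt.2 fun x => ?_
    by_cases hx : x ∈ tsupport χ
    · exact χ.contDiff.contDiffAt.mul (hu.contDiffAt (hΩ.mem_nhds (hχΩ hx)))
    · refine (contDiffAt_const (c := 0)).congr_of_eventuallyEq ?_
      filter_upwards [notMem_tsupport_iff_eventuallyEq.1 hx] with y hy
      rw [hy, Pi.zero_apply, zero_mul]
  have heq : EqOn (fun x => χ x * u x) u (ball x₀ R) := fun x hx => by
    simp only [χ.one_of_mem_closedBall (ball_subset_closedBall hx), one_mul]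
  exact ⟨_, ⟨hcont, hW.congr_of_subset isOpen_ball hRΩ heq,
    hS.congr_of_subset isOpen_ball hRΩ heq⟩, heq (mem_ball_self hR),
    gradient_eq_of_eqOn isOpen_ball heq (mem_ball_self hR)⟩

end WeakSolutions

section Mollification

variable {E : Type*} [NormedAddCommGroup E] [InnerProductSpace ℝ E] [FiniteDimensional ℝ E]
  [MeasurableSpace E] [BorelSpace E] {U : Set E} {φ : E → ℝ}

open scoped Convolution in
lemma exists_contDiff_approx (hφ : ContDiff ℝ 1 φ) (hc : HasCompactSupport φ) {ρ ε : ℝ}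
    (hρ : 0 < ρ) (hε : 0 < ε) :
    ∃ ψ : E → ℝ, ContDiff ℝ (⊤ : ℕ∞) ψ ∧ tsupport ψ ⊆ cthickening ρ (tsupport φ) ∧
      (∀ x, |φ x - ψ x| ≤ ε) ∧ ∀ x, ‖∇ φ x - ∇ ψ x‖ ≤ ε := by
  have hDφ : Continuous (fderiv ℝ φ) := hφ.continuous_fderiv one_ne_zero
  obtain ⟨d₁, hd₁, hφd⟩ := Metric.uniformContinuous_iff.1
    (hc.uniformContinuous_of_continuous hφ.continuous) ε hε
  obtain ⟨d₂, hd₂, hDφd⟩ := Metric.uniformContinuous_iff.1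
    ((hc.fderiv ℝ).uniformContinuous_of_continuous hDφ) ε hε
  have hr : 0 < min ρ (min d₁ d₂) := lt_min hρ (lt_min hd₁ hd₂)
  let b : ContDiffBump (0 : E) :=
    ⟨min ρ (min d₁ d₂) / 2, min ρ (min d₁ d₂), half_pos hr, half_lt_self hr⟩
  let L := ContinuousLinearMap.lsmul ℝ ℝ (E := ℝ)
  have hfderiv : ∀ x, fderiv ℝ (b.normed volume ⋆[L, volume] φ) x =
      (b.normed volume ⋆[ContinuousLinearMap.lsmul ℝ ℝ, volume] fderiv ℝ φ) x := fun x =>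
    (HasCompactSupport.hasFDerivAt_convolution_right (μ := volume) L hc
      b.continuous_normed.locallyIntegrable hφ x).fderiv
  refine ⟨b.normed volume ⋆[L, volume] φ, ?_, ?_, fun x => ?_, fun x => ?_⟩
  · exact HasCompactSupport.contDiff_convolution_left L b.hasCompactSupport_normed
      b.contDiff_normed hφ.continuous.locallyIntegrable
  · refine closure_minimal (fun x hx => ?_) isClosed_cthickening
    obtain ⟨y, hy, z, hz, rfl⟩ := support_convolution_subset L hx
    rw [b.support_normed_eq, mem_ball_zero_iff] at hy
    refine mem_cthickening_of_dist_le _ z _ _ (subset_closure hz) ?_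
    change dist (y + z) z ≤ ρ
    rw [dist_eq_norm, add_sub_cancel_right]
    exact hy.le.trans (min_le_left _ _)
  · rw [← Real.dist_eq, dist_comm]
    exact b.dist_normed_convolution_le hφ.continuous.aestronglyMeasurable fun y hy =>
      (hφd (hy.trans_le ((min_le_right _ _).trans (min_le_left _ _)))).le
  · rw [gradient, gradient, ← map_sub, LinearIsometryEquiv.norm_map, ← dist_eq_norm, dist_comm,
      hfderiv]
    exact b.dist_normed_convolution_le hDφ.aestronglyMeasurable fun y hy =>
      (hDφd (hy.trans_le ((min_le_right _ _).trans (min_le_right _ _)))).le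

lemma IsTestFunction.integrable_weak {f : E → E} {g : E → ℝ} (hφ : IsTestFunction U φ)
    (hf : Continuous f) (hg : Continuous g) :
    Integrable fun x => ⟪f x, ∇ φ x⟫ - g x * φ x := by
  refine integrable_of_eq_zero_off_tsupport ?_ hφ.hasCompactSupport fun x hx => ?_
  · exact (hf.inner (continuous_gradient hφ.contDiff)).sub (hg.mul hφ.contDiff.continuous)
  · rw [gradient_eq_zero_of_notMem_tsupport hx, image_eq_zero_of_notMem_tsupport hx,
      inner_zero_right, mul_zero, sub_zero]

lemma IsTestFunction.abs_integral_weak_le {f : E → E} {g : E → ℝ} (hφ : IsTestFunction U φ)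
    (hf : Continuous f) (hg : Continuous g) (hU : IsCompact U) {ε : ℝ} (h : ∀ x, |φ x| ≤ ε)
    (h' : ∀ x, ‖∇ φ x‖ ≤ ε) :
    |∫ x, (⟪f x, ∇ φ x⟫ - g x * φ x)| ≤ ε * ∫ x in U, (‖f x‖ + |g x|) := by
  rw [← setIntegral_eq_integral_of_forall_compl_eq_zero (s := U) fun x hx => ?_,
    ← integral_const_mul, ← Real.norm_eq_abs]
  · have hint : IntegrableOn (fun x => ‖f x‖ + |g x|) U :=
      (hf.norm.add hg.abs).continuousOn.integrableOn_compact hU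
    refine norm_integral_le_of_norm_le (hint.const_mul ε) (Eventually.of_forall fun x => ?_)
    calc ‖⟪f x, ∇ φ x⟫ - g x * φ x‖ ≤ ‖f x‖ * ‖∇ φ x‖ + |g x| * |φ x| :=
          (norm_sub_le _ _).trans (add_le_add (norm_inner_le_norm _ _) (norm_mul_le _ _))
      _ ≤ ‖f x‖ * ε + |g x| * ε := by
          gcongr
          exacts [h' x, h x]
      _ = ε * (‖f x‖ + |g x|) := by ring
  · have hx' : x ∉ tsupport φ := fun h => hx (hφ.tsupport_subset h)
    rw [gradient_eq_zero_of_notMem_tsupport hx', image_eq_zero_of_notMem_tsupport hx',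
      inner_zero_right, mul_zero, sub_zero]

lemma integral_inner_gradient_eq_of_contDiff {f : E → E} {g : E → ℝ} (hf : Continuous f)
    (hg : Continuous g) (hU : IsOpen U)
    (h : ∀ φ : E → ℝ, ContDiff ℝ (⊤ : ℕ∞) φ → HasCompactSupport φ → tsupport φ ⊆ U →
      ∫ x, (⟪f x, ∇ φ x⟫ - g x * φ x) = 0) (hφ : IsTestFunction U φ) :
    ∫ x, (⟪f x, ∇ φ x⟫ - g x * φ x) = 0 := by
  obtain ⟨ρ, hρ, hTU⟩ :=
    hφ.hasCompactSupport.isCompact.exists_cthickening_subset_open hU hφ.tsupport_subset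
  have hT : IsCompact (cthickening ρ (tsupport φ)) := hφ.hasCompactSupport.isCompact.cthickening
  have hbound : ∀ ε > 0, |∫ x, (⟪f x, ∇ φ x⟫ - g x * φ x)| ≤
      ε * ∫ x in cthickening ρ (tsupport φ), (‖f x‖ + |g x|) := by
    intro ε hε
    obtain ⟨ψ, hψ, hψT, hval, hgrad⟩ :=
      exists_contDiff_approx hφ.contDiff hφ.hasCompactSupport hρ hε
    have hψc : HasCompactSupport ψ :=
      HasCompactSupport.of_support_subset_isCompact hT (subset_closure.trans hψT)
    have hψtest : IsTestFunction U ψ :=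
      ⟨hψ.of_le (mod_cast le_top), hψc, hψT.trans hTU⟩
    have hsubgrad : ∀ x, ∇ (fun y => φ y - ψ y) x = ∇ φ x - ∇ ψ x := fun x =>
      gradient_fun_sub (hφ.differentiableAt x) (hψtest.differentiableAt x)
    have hsub : IsTestFunction (cthickening ρ (tsupport φ)) fun x => φ x - ψ x :=
      ⟨hφ.contDiff.sub hψtest.contDiff, hφ.hasCompactSupport.sub hψc,
        (tsupport_sub φ ψ).trans (union_subset (self_subset_cthickening _) hψT)⟩
    have hdiff := hsub.abs_integral_weak_le hf hg hT hval fun x => (hsubgrad x).symm ▸ hgrad x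
    have hint := integral_sub (hφ.integrable_weak hf hg) (hψtest.integrable_weak hf hg)
    rw [h ψ hψ hψc (hψT.trans hTU), sub_zero] at hint
    rw [← hint]
    refine (congrArg _ (integral_congr_ae (Eventually.of_forall fun x => ?_))).trans_le hdiff
    simp only [hsubgrad, inner_sub_right]
    ring
  have hlim : Tendsto (fun ε : ℝ => ε * ∫ x in cthickening ρ (tsupport φ), (‖f x‖ + |g x|))
      (𝓝[>] 0) (𝓝 0) := by
    simpa only [id_eq, zero_mul] using
      ((tendsto_id (x := 𝓝 (0 : ℝ))).mul_const (∫ x in cthickening ρ (tsupport φ),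
        (‖f x‖ + |g x|))).mono_left nhdsWithin_le_nhds
  exact abs_nonpos_iff.1 (ge_of_tendsto hlim (eventually_mem_nhdsWithin.mono hbound))

end Mollification

section WeakSolutionsOfClassC1

variable {E : Type*} [NormedAddCommGroup E] [InnerProductSpace ℝ E] [FiniteDimensional ℝ E]
  [MeasurableSpace E] [BorelSpace E] {p lam : ℝ} {v : E → ℝ} {U : Set E} {φ : E → ℝ}

lemma IsTestFunction.integrable_inner_gradient {f : E → E} (hφ : IsTestFunction U φ)
    (hf : Continuous f) : Integrable fun x => ⟪f x, ∇ φ x⟫ := by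
  simpa using hφ.integrable_weak hf (continuous_const (y := 0))

lemma IsTestFunction.integrable_mul {g : E → ℝ} (hφ : IsTestFunction U φ) (hg : Continuous g) :
    Integrable fun x => g x * φ x := by
  simpa using (hφ.integrable_weak (continuous_const (y := 0)) hg).neg

lemma IsWeakSolution.integral_eq (hv : ContDiff ℝ 1 v) (hU : IsOpen U) (hp : 2 ≤ p)
    (hlam : 1 ≤ lam) (h : IsWeakSolution p lam v U) (hφ : IsTestFunction U φ) :
    ∫ x, ⟪‖∇ v x‖ ^ (p - 2) • ∇ v x, ∇ φ x⟫ = ∫ x, signedPow (lam - 1) (v x) * φ x := by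
  have hf := continuous_norm_rpow_smul_gradient hv hp
  have hg : Continuous fun x => signedPow (lam - 1) (v x) :=
    (continuous_signedPow (sub_nonneg.2 hlam)).comp hv.continuous
  rw [← sub_eq_zero, ← integral_sub (hφ.integrable_inner_gradient hf) (hφ.integrable_mul hg)]
  refine integral_inner_gradient_eq_of_contDiff hf hg hU (fun ψ hψ hc hs => ?_) hφ
  have hψtest : IsTestFunction U ψ := ⟨hψ.of_le (mod_cast le_top), hc, hs⟩
  rw [integral_sub (hψtest.integrable_inner_gradient hf) (hψtest.integrable_mul hg), sub_eq_zero]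
  exact isWeakSolution_iff.1 h ψ hψ hc hs

end WeakSolutionsOfClassC1

section PowerMass

variable {X : Type*} {σ : ℝ} {m : ℕ} {v η : X → ℝ} {x : X}

/-- The integrand `|v|^σ η^(2m)`. -/
noncomputable def powerMass (σ : ℝ) (m : ℕ) (v η : X → ℝ) (x : X) : ℝ :=
  |v x| ^ σ * η x ^ (2 * m)

lemma powerMass_nonneg : 0 ≤ powerMass σ m v η x := by
  rw [powerMass, mul_comm 2 m, pow_mul]
  positivity

end PowerMass

section MixedTerms

variable {p lam γ : ℝ}

lemma exists_rpow_mul_rpow_mul_rpow_le {α β κ ε : ℝ} (hα : 0 < α) (hβ : 0 < β) (hκ : 0 < κ)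
    (hsum : α + β + κ = 1) (hε : 0 < ε) :
    ∃ C : ℝ, 0 < C ∧ ∀ A B T : ℝ, 0 ≤ A → 0 ≤ B → 0 ≤ T →
      A ^ α * B ^ β * T ^ κ ≤ ε * (A + B) + C * T := by
  set C := ε ^ (-((α + β) / κ)) with hC
  have hC0 : 0 < C := Real.rpow_pos_of_pos hε _
  have hweights : ε ^ α * ε ^ β * C ^ κ = 1 := by
    rw [hC, ← Real.rpow_mul hε.le, ← Real.rpow_add hε, ← Real.rpow_add hε]
    convert Real.rpow_zero ε using 2
    field_simp
    ring
  refine ⟨C, hC0, fun A B T hA hB hT => ?_⟩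
  calc A ^ α * B ^ β * T ^ κ
      = ε ^ α * ε ^ β * C ^ κ * (A ^ α * B ^ β * T ^ κ) := by rw [hweights, one_mul]
    _ = (ε * A) ^ α * (ε * B) ^ β * (C * T) ^ κ := by
        rw [Real.mul_rpow hε.le hA, Real.mul_rpow hε.le hB, Real.mul_rpow hC0.le hT]
        ring
    _ ≤ α * (ε * A) + β * (ε * B) + κ * (C * T) :=
        Real.geom_mean_le_arith_mean3_weighted hα.le hβ.le hκ.le (by positivity) (by positivity)
          (by positivity) hsum
    _ ≤ 1 * (ε * A) + 1 * (ε * B) + 1 * (C * T) := by gcongr <;> linarith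
    _ = ε * (A + B) + C * T := by ring

/-- The power `p (λ + γ) / (λ - p + 1)` of `|∇η|` produced by Young's inequality when the terms
containing derivatives of the cutoff `η` are absorbed. -/
noncomputable def cutoffExponent (p lam γ : ℝ) : ℝ := p * (lam + γ) / (lam - p + 1)

lemma lt_cutoffExponent (hp : 0 < p) (hlam : p - 1 < lam) (hγ : 1 - p < γ) :
    p < cutoffExponent p lam γ := by
  rw [cutoffExponent, lt_div_iff₀ (by linarith)]
  exact mul_lt_mul_of_pos_left (by linarith) hp

variable {E : Type*} [NormedAddCommGroup E] [InnerProductSpace ℝ E] [CompleteSpace E]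
  {m i : ℕ} {v η : E → ℝ} {x : E}

/-- The terms that appear when the equation and the stability inequality are tested with powers
of `v` times powers of the cutoff `η`; `i` counts the factors `|∇η|`. -/
noncomputable def mixedTerm (p γ : ℝ) (m : ℕ) (v η : E → ℝ) (i : ℕ) (x : E) : ℝ :=
  ‖∇ v x‖ ^ (p - i) * |v x| ^ (γ - 1 + i) * η x ^ (2 * m - i) * ‖∇ η x‖ ^ i

lemma mixedTerm_zero :
    mixedTerm p γ m v η 0 x = ‖∇ v x‖ ^ p * |v x| ^ (γ - 1) * η x ^ (2 * m) := by
  simp only [mixedTerm, Nat.cast_zero, sub_zero, add_zero, Nat.sub_zero, pow_zero, mul_one]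

lemma mixedTerm_nonneg (hη : 0 ≤ η x) : 0 ≤ mixedTerm p γ m v η i x := by
  unfold mixedTerm
  positivity

-- The exponents of `|∇v|`, `|v|` and `|∇η|` on both sides agree; only those of `η ≤ 1` differ.
lemma mixedTerm_le_rpow_mul_rpow_mul_rpow (hp : 0 < p) (hlam : p - 1 < lam) (hγ : 1 ≤ γ)
    (hm : cutoffExponent p lam γ ≤ 2 * m) (hi : 0 < i) (hip : (i : ℝ) < p) (hη₀ : 0 ≤ η x)
    (hη₁ : η x ≤ 1) :
    mixedTerm p γ m v η i x ≤ mixedTerm p γ m v η 0 x ^ (1 - i / p) *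
      powerMass (lam + γ) m v η x ^ (i / p - i / cutoffExponent p lam γ) *
        (‖∇ η x‖ ^ cutoffExponent p lam γ) ^ (i / cutoffExponent p lam γ) := by
  have hs := lt_cutoffExponent hp hlam (by linarith : 1 - p < γ)
  have hi' : (0 : ℝ) < i := mod_cast hi
  have hα : 0 < 1 - i / p := by rwa [sub_pos, div_lt_one hp]
  have hβ : 0 < i / p - i / cutoffExponent p lam γ := sub_pos.2 (by gcongr)
  have hi2m : i < 2 * m := by
    have : (i : ℝ) < 2 * m := by linarith
    exact_mod_cast this
  have hv_exp : (γ - 1) * (1 - i / p) + (lam + γ) * (i / p - i / cutoffExponent p lam γ) =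
      γ - 1 + i := by
    have : lam - p + 1 ≠ 0 := by linarith
    have : lam + γ ≠ 0 := by linarith
    rw [cutoffExponent]
    field_simp
    ring
  have hη_exp : 2 * m * (1 - i / p) + 2 * m * (i / p - i / cutoffExponent p lam γ) ≤
      ((2 * m - i : ℕ) : ℝ) := by
    have : (i : ℝ) ≤ 2 * m * (i / cutoffExponent p lam γ) := by
      rw [mul_div_left_comm]
      exact le_mul_of_one_le_right hi'.le ((one_le_div (hp.trans hs)).2 hm)
    push_cast [Nat.cast_sub hi2m.le]
    linarith
  have hη_pow : η x ^ (2 * m - i) ≤ η x ^ (2 * m * (1 - i / p)) *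
      η x ^ (2 * m * (i / p - i / cutoffExponent p lam γ)) := by
    rw [← Real.rpow_add_of_nonneg hη₀ (by positivity) (by positivity), ← Real.rpow_natCast]
    refine Real.rpow_le_rpow_of_exponent_ge_of_imp hη₀ hη₁ hη_exp fun _ h => absurd h ?_
    exact_mod_cast (Nat.sub_pos_of_lt hi2m).ne'
  rw [mixedTerm_zero, powerMass, Real.mul_rpow (by positivity) (by positivity),
    Real.mul_rpow (by positivity) (by positivity), Real.mul_rpow (by positivity) (by positivity),
    ← Real.rpow_natCast (η x), ← Real.rpow_mul (norm_nonneg _), ← Real.rpow_mul (abs_nonneg _),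
    ← Real.rpow_mul (abs_nonneg _), ← Real.rpow_mul hη₀, ← Real.rpow_mul hη₀,
    ← Real.rpow_mul (norm_nonneg _), mul_div_cancel₀ _ (hp.trans hs).ne', Real.rpow_natCast,
    mul_one_sub p, mul_div_cancel₀ _ hp.ne', mixedTerm, ← hv_exp,
    Real.rpow_add_of_nonneg (abs_nonneg _) (mul_nonneg (by linarith) hα.le)
      (mul_nonneg (by linarith) hβ.le), Nat.cast_mul, Nat.cast_two]
  refine (mul_le_mul_of_nonneg_right (mul_le_mul_of_nonneg_left hη_pow (by positivity))
    (by positivity)).trans_eq ?_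
  ring

lemma exists_mixedTerm_le (hp : 0 < p) (hlam : p - 1 < lam) (hγ : 1 ≤ γ)
    (hm : cutoffExponent p lam γ ≤ 2 * m) (hi : 0 < i) (hip : (i : ℝ) < p) {ε : ℝ} (hε : 0 < ε) :
    ∃ C : ℝ, 0 < C ∧ ∀ (v η : E → ℝ) (x : E), 0 ≤ η x → η x ≤ 1 →
      mixedTerm p γ m v η i x ≤
        ε * (mixedTerm p γ m v η 0 x + powerMass (lam + γ) m v η x) +
          C * ‖∇ η x‖ ^ cutoffExponent p lam γ := by
  have hs := lt_cutoffExponent hp hlam (by linarith : 1 - p < γ)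
  have : (0 : ℝ) < i := mod_cast hi
  have hs₀ : 0 < cutoffExponent p lam γ := hp.trans hs
  obtain ⟨C, hC, hyoung⟩ := exists_rpow_mul_rpow_mul_rpow_le (α := 1 - i / p)
    (β := i / p - i / cutoffExponent p lam γ) (κ := i / cutoffExponent p lam γ)
    (by rwa [sub_pos, div_lt_one hp]) (sub_pos.2 (by gcongr)) (by positivity) (by ring) hε
  exact ⟨C, hC, fun v η x hη₀ hη₁ =>
    (mixedTerm_le_rpow_mul_rpow_mul_rpow hp hlam hγ hm hi hip hη₀ hη₁).trans
      (hyoung _ _ _ (mixedTerm_nonneg hη₀) powerMass_nonneg (by positivity))⟩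

end MixedTerms

section StabilityEstimate

variable {E : Type*} [NormedAddCommGroup E] [InnerProductSpace ℝ E] {U : Set E} {v η : E → ℝ}
  {p lam γ s σ : ℝ} {m i : ℕ} {x : E}

/-- A test function with values in `[0, 1]`. -/
structure IsCutoff (U : Set E) (η : E → ℝ) : Prop extends IsTestFunction U η where
  nonneg : ∀ x, 0 ≤ η x
  le_one : ∀ x, η x ≤ 1

section Pointwise

variable [CompleteSpace E]

lemma mixedTerm_sub_le_inner (hp : 1 < p) (hγ : 1 ≤ γ) (hv : DifferentiableAt ℝ v x)
    (hη : DifferentiableAt ℝ η x) (hη₀ : 0 ≤ η x) :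
    γ * mixedTerm p γ m v η 0 x - 2 * m * mixedTerm p γ m v η 1 x ≤
      ⟪‖∇ v x‖ ^ (p - 2) • ∇ v x, ∇ (fun y => signedPow (γ - 1) (v y) * η y ^ (2 * m)) x⟫ := by
  have hγ₀ : 0 ≤ γ - 1 := by linarith
  have hp_split : ‖∇ v x‖ ^ p = ‖∇ v x‖ ^ (p - 2) * ‖∇ v x‖ * ‖∇ v x‖ := by
    rw [← Real.rpow_add_one' (norm_nonneg _) (by linarith),
      ← Real.rpow_add_one' (norm_nonneg _) (by linarith)]
    ring_nf
  have hp_split₁ : ‖∇ v x‖ ^ (p - (1 : ℕ)) = ‖∇ v x‖ ^ (p - 2) * ‖∇ v x‖ := by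
    rw [← Real.rpow_add_one' (norm_nonneg _) (by linarith)]
    push_cast
    ring_nf
  have hv_pow : |v x| ^ (γ - 1 + (1 : ℕ)) = |signedPow (γ - 1) (v x)| := by
    rw [abs_signedPow hγ₀, Nat.cast_one]
  have hcs : -(|signedPow (γ - 1) (v x)| * (‖∇ v x‖ * ‖∇ η x‖)) ≤
      signedPow (γ - 1) (v x) * ⟪∇ v x, ∇ η x⟫ := by
    refine neg_le_of_abs_le ?_
    rw [abs_mul]
    gcongr
    exact abs_real_inner_le_norm _ _
  rw [gradient_comp_mul_pow hv (hasDerivAt_signedPow hγ₀ _) hη, mixedTerm_zero, mixedTerm,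
    real_inner_smul_left, inner_add_right, inner_smul_right, inner_smul_right,
    real_inner_self_eq_norm_sq, hp_split, hp_split₁, hv_pow]
  have := mul_le_mul_of_nonneg_left hcs
    (by positivity : 0 ≤ ‖∇ v x‖ ^ (p - 2) * (2 * m * η x ^ (2 * m - 1)))
  push_cast
  linarith

lemma norm_gradient_signedPow_mul_pow_le (hγ : 1 ≤ γ) (hv : DifferentiableAt ℝ v x)
    (hη : DifferentiableAt ℝ η x) (hη₀ : 0 ≤ η x) :
    ‖∇ (fun y => signedPow ((γ - 1) / 2) (v y) * η y ^ m) x‖ ≤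
      (γ + 1) / 2 * |v x| ^ ((γ - 1) / 2) * η x ^ m * ‖∇ v x‖ +
        |v x| ^ ((γ - 1) / 2) * |v x| * (m * η x ^ (m - 1)) * ‖∇ η x‖ := by
  rw [gradient_comp_mul_pow hv (hasDerivAt_signedPow (by linarith) _) hη]
  refine (norm_add_le _ _).trans_eq ?_
  rw [norm_smul, norm_smul, Real.norm_of_nonneg (mul_nonneg (mul_nonneg (by linarith)
    (by positivity)) (by positivity)), norm_mul, signedPow, norm_mul,
    Real.norm_of_nonneg (by positivity), Real.norm_of_nonneg (mul_nonneg (Nat.cast_nonneg m)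
    (pow_nonneg hη₀ _)), Real.norm_eq_abs]
  ring

lemma rpow_mul_norm_gradient_sq_le (hp : 2 < p) (hγ : 1 ≤ γ) (hm : m ≠ 0)
    (hv : DifferentiableAt ℝ v x) (hη : DifferentiableAt ℝ η x) (hη₀ : 0 ≤ η x) :
    ‖∇ v x‖ ^ (p - 2) * ‖∇ (fun y => signedPow ((γ - 1) / 2) (v y) * η y ^ m) x‖ ^ 2 ≤
      ((γ + 1) / 2) ^ 2 * mixedTerm p γ m v η 0 x +
        2 * ((γ + 1) / 2) * m * mixedTerm p γ m v η 1 x + m ^ 2 * mixedTerm p γ m v η 2 x := by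
  have hγ₀ : 0 ≤ (γ - 1) / 2 := by linarith
  set b := |v x| ^ ((γ - 1) / 2) with hb
  set g := ‖∇ v x‖ ^ (p - 2) with hg
  have hv_pow₀ : |v x| ^ (γ - 1) = b * b := by
    rw [hb, ← Real.rpow_add_of_nonneg (abs_nonneg _) hγ₀ hγ₀, add_halves]
  have hv_pow₁ : |v x| ^ (γ - 1 + (1 : ℕ)) = b * b * |v x| := by
    rw [Nat.cast_one, Real.rpow_add_one' (abs_nonneg _) (by linarith), hv_pow₀]
  have hv_pow₂ : |v x| ^ (γ - 1 + (2 : ℕ)) = b * b * |v x| ^ 2 := by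
    rw [Real.rpow_add_of_nonneg (abs_nonneg _) (by linarith) (by positivity), Real.rpow_natCast,
      hv_pow₀]
  have hp_split₁ : ‖∇ v x‖ ^ (p - (1 : ℕ)) = g * ‖∇ v x‖ := by
    rw [hg, ← Real.rpow_add_one' (norm_nonneg _) (by linarith)]
    push_cast
    ring_nf
  have hp_split : ‖∇ v x‖ ^ p = g * ‖∇ v x‖ ^ 2 := by
    rw [hg, ← Real.rpow_natCast, ← Real.rpow_add_of_nonneg (norm_nonneg _) (by linarith)
      (by positivity)]
    push_cast
    ring_nf
  have hnorm := norm_gradient_signedPow_mul_pow_le (m := m) hγ hv hη hη₀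
  rw [← hb] at hnorm
  refine (mul_le_mul_of_nonneg_left (pow_le_pow_left₀ (norm_nonneg _) hnorm 2)
    (by positivity)).trans_eq ?_
  obtain ⟨k, rfl⟩ := Nat.exists_eq_add_one_of_ne_zero hm
  rw [mixedTerm_zero, mixedTerm, mixedTerm, hv_pow₀, hv_pow₁, hv_pow₂, hp_split, hp_split₁,
    show 2 * (k + 1) - 1 = 2 * k + 1 by omega, show 2 * (k + 1) - 2 = 2 * k by omega,
    Nat.add_sub_cancel, Nat.cast_two, ← hg]
  ring

lemma stabilityDensity_le (hp : 2 < p) (hlam : 1 ≤ lam) (hγ : 1 ≤ γ) (hm : m ≠ 0)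
    (hv : DifferentiableAt ℝ v x) (hη : DifferentiableAt ℝ η x) (hη₀ : 0 ≤ η x) :
    stabilityDensity p lam v (fun y => signedPow ((γ - 1) / 2) (v y) * η y ^ m) x ≤
      (p - 1) * (((γ + 1) / 2) ^ 2 * mixedTerm p γ m v η 0 x +
        2 * ((γ + 1) / 2) * m * mixedTerm p γ m v η 1 x + m ^ 2 * mixedTerm p γ m v η 2 x) -
        lam * powerMass (lam + γ) m v η x := by
  have hgrad := mul_le_mul_of_nonneg_left (rpow_mul_norm_gradient_sq_le hp hγ hm hv hη hη₀)
    (by linarith : 0 ≤ p - 1)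
  have hinner := mul_le_mul_of_nonneg_left (norm_rpow_mul_inner_sq_le p (∇ v x)
    (∇ (fun y => signedPow ((γ - 1) / 2) (v y) * η y ^ m) x)) (by linarith : 0 ≤ p - 2)
  have hmass : |v x| ^ (lam - 1) * (signedPow ((γ - 1) / 2) (v x) * η x ^ m) ^ 2 =
      powerMass (lam + γ) m v η x := by
    rw [mul_pow, ← sq_abs (signedPow _ _), abs_signedPow (by linarith), ← Real.rpow_natCast,
      ← Real.rpow_mul (abs_nonneg _), ← mul_assoc,
      ← Real.rpow_add_of_nonneg (abs_nonneg _) (by linarith) (by push_cast; linarith), powerMass,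
      ← pow_mul, mul_comm m 2]
    push_cast
    ring_nf
  rw [stabilityDensity, mul_assoc lam, hmass]
  linarith

end Pointwise

variable [FiniteDimensional ℝ E] [MeasurableSpace E] [BorelSpace E]

lemma IsTestFunction.integrable_norm_gradient_rpow (hη : IsTestFunction U η) (hs : 0 < s) :
    Integrable fun x => ‖∇ η x‖ ^ s := by
  refine integrable_of_eq_zero_off_tsupport ?_ hη.hasCompactSupport fun x hx => ?_
  · exact (continuous_gradient hη.contDiff).norm.rpow_const fun _ => Or.inr hs.le
  · rw [gradient_eq_zero_of_notMem_tsupport hx, norm_zero, Real.zero_rpow hs.ne']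

lemma IsTestFunction.integrable_powerMass (hη : IsTestFunction U η) (hv : Continuous v)
    (hσ : 0 ≤ σ) (hm : m ≠ 0) : Integrable (powerMass σ m v η) :=
  (hη.pow (mul_ne_zero two_ne_zero hm)).integrable_mul
    (hv.abs.rpow_const fun _ => Or.inr hσ)

lemma IsTestFunction.integrable_mixedTerm (hη : IsTestFunction U η) (hv : ContDiff ℝ 1 v)
    (hγ : 1 ≤ γ) (hip : (i : ℝ) ≤ p) (him : i < 2 * m) :
    Integrable (mixedTerm p γ m v η i) := by
  refine integrable_of_eq_zero_off_tsupport ?_ hη.hasCompactSupport fun x hx => ?_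
  · have hgv := (continuous_gradient hv).norm.rpow_const fun _ => Or.inr (sub_nonneg.2 hip)
    have hv' := hv.continuous.abs.rpow_const (p := γ - 1 + i) fun _ => Or.inr (by linarith)
    exact ((hgv.mul hv').mul (hη.contDiff.continuous.pow _)).mul
      ((continuous_gradient hη.contDiff).norm.pow i)
  · rw [mixedTerm, image_eq_zero_of_notMem_tsupport hx, zero_pow (Nat.sub_ne_zero_of_lt him),
      mul_zero, zero_mul]

lemma IsTestFunction.integrable_stabilityDensity (hη : IsTestFunction U η)
    (hv : ContDiff ℝ 1 v) (hp : 2 ≤ p) (hlam : 1 ≤ lam) :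
    Integrable (stabilityDensity p lam v η) := by
  have hgv := continuous_gradient hv
  have hgη := continuous_gradient hη.contDiff
  have hsq : Integrable fun x => ‖∇ v x‖ ^ (p - 2) * ‖∇ η x‖ ^ 2 := by
    refine integrable_of_eq_zero_off_tsupport ?_ hη.hasCompactSupport fun x hx => ?_
    · exact (hgv.norm.rpow_const fun _ => Or.inr (sub_nonneg.2 hp)).mul (hgη.norm.pow 2)
    · rw [gradient_eq_zero_of_notMem_tsupport hx, norm_zero, zero_pow two_ne_zero, mul_zero]
  have hinner : Integrable fun x => ‖∇ v x‖ ^ (p - 4) * ⟪∇ v x, ∇ η x⟫ ^ 2 := by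
    refine hsq.mono' ?_ (Eventually.of_forall fun x => ?_)
    · exact ((hgv.measurable.norm.pow_const _).mul
        ((hgv.inner hgη).measurable.pow_const 2)).aestronglyMeasurable
    · rw [Real.norm_of_nonneg (by positivity)]
      exact norm_rpow_mul_inner_sq_le p _ _
  have hmass : Integrable fun x => |v x| ^ (lam - 1) * η x ^ 2 :=
    (hη.pow two_ne_zero).integrable_mul
      (hv.continuous.abs.rpow_const fun _ => Or.inr (sub_nonneg.2 hlam))
  refine (hsq.add ((hinner.const_mul (p - 2)).sub (hmass.const_mul lam))).congr
    (Eventually.of_forall fun x => ?_)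
  simp only [stabilityDensity, Pi.add_apply, Pi.sub_apply, mul_assoc]

end StabilityEstimate

section StabilityEstimateIntegrated

variable {E : Type*} [NormedAddCommGroup E] [InnerProductSpace ℝ E] [FiniteDimensional ℝ E]
  [MeasurableSpace E] [BorelSpace E] {U : Set E} {v η : E → ℝ} {p lam γ : ℝ} {m : ℕ}

lemma IsWeakSolution.integral_mixedTerm_sub_le (h : IsWeakSolution p lam v U)
    (hv : ContDiff ℝ 1 v) (hU : IsOpen U) (hp : 2 ≤ p) (hlam : 1 ≤ lam) (hγ : 1 ≤ γ) (hm : m ≠ 0)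
    (hη : IsCutoff U η) :
    γ * ∫ x, mixedTerm p γ m v η 0 x ≤
      (∫ x, powerMass (lam + γ) m v η x) + 2 * m * ∫ x, mixedTerm p γ m v η 1 x := by
  have htest := hη.toIsTestFunction
  have hφ : IsTestFunction U fun x => signedPow (γ - 1) (v x) * η x ^ (2 * m) :=
    (htest.pow (mul_ne_zero two_ne_zero hm)).mul_left
      ((contDiff_signedPow (by linarith)).comp hv)
  have hT₀ := htest.integrable_mixedTerm (p := p) (i := 0) hv hγ (by push_cast; linarith)
    (by lia : 0 < 2 * m)
  have hT₁ := htest.integrable_mixedTerm (p := p) (i := 1) hv hγ (by push_cast; linarith)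
    (by lia : 1 < 2 * m)
  have hmass (x : E) : signedPow (lam - 1) (v x) * (signedPow (γ - 1) (v x) * η x ^ (2 * m)) =
      powerMass (lam + γ) m v η x := by
    have hexp : lam + γ = lam - 1 + (γ - 1) + (2 : ℕ) := by
      push_cast
      ring
    rw [signedPow, signedPow, powerMass, hexp, Real.rpow_add_of_nonneg (abs_nonneg _)
      (by linarith) (by positivity), Real.rpow_add_of_nonneg (abs_nonneg _) (by linarith)
      (by linarith), Real.rpow_natCast, sq_abs]
    ring
  rw [← sub_le_iff_le_add, ← integral_const_mul, ← integral_const_mul,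
    ← integral_sub (hT₀.const_mul _) (hT₁.const_mul _), ← integral_congr_ae
    (Eventually.of_forall hmass), ← h.integral_eq hv hU hp hlam hφ]
  exact integral_mono ((hT₀.const_mul _).sub (hT₁.const_mul _))
    (hφ.integrable_inner_gradient (continuous_norm_rpow_smul_gradient hv hp)) fun x =>
    mixedTerm_sub_le_inner (by linarith) hγ (hv.differentiable one_ne_zero x)
      (htest.differentiableAt x) (hη.nonneg x)

lemma IsStable.integral_powerMass_le (h : IsStable p lam v U) (hv : ContDiff ℝ 1 v) (hp : 2 < p)
    (hlam : 1 ≤ lam) (hγ : 1 ≤ γ) (hm : 1 < m) (hη : IsCutoff U η) :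
    lam * ∫ x, powerMass (lam + γ) m v η x ≤
      (p - 1) * (((γ + 1) / 2) ^ 2 * (∫ x, mixedTerm p γ m v η 0 x) +
        2 * ((γ + 1) / 2) * m * (∫ x, mixedTerm p γ m v η 1 x) +
          m ^ 2 * ∫ x, mixedTerm p γ m v η 2 x) := by
  have htest := hη.toIsTestFunction
  have hφ : IsTestFunction U fun x => signedPow ((γ - 1) / 2) (v x) * η x ^ m :=
    (htest.pow (by lia)).mul_left ((contDiff_signedPow (by linarith)).comp hv)
  have hT₀ := htest.integrable_mixedTerm (p := p) (i := 0) hv hγ (by push_cast; linarith)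
    (by lia : 0 < 2 * m)
  have hT₁ := htest.integrable_mixedTerm (p := p) (i := 1) hv hγ (by push_cast; linarith)
    (by lia : 1 < 2 * m)
  have hT₂ := htest.integrable_mixedTerm (p := p) (i := 2) hv hγ (by push_cast; linarith)
    (by lia : 2 < 2 * m)
  have hB := htest.integrable_powerMass (m := m) hv.continuous (by linarith : 0 ≤ lam + γ)
    (by lia)
  have hT₀₁ : Integrable fun x => ((γ + 1) / 2) ^ 2 * mixedTerm p γ m v η 0 x +
      2 * ((γ + 1) / 2) * m * mixedTerm p γ m v η 1 x := (hT₀.const_mul _).add (hT₁.const_mul _)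
  have hT : Integrable fun x => (p - 1) * (((γ + 1) / 2) ^ 2 * mixedTerm p γ m v η 0 x +
      2 * ((γ + 1) / 2) * m * mixedTerm p γ m v η 1 x + m ^ 2 * mixedTerm p γ m v η 2 x) :=
    (hT₀₁.add (hT₂.const_mul _)).const_mul _
  rw [← sub_nonneg, ← integral_const_mul lam, ← integral_const_mul, ← integral_const_mul,
    ← integral_const_mul, ← integral_add (hT₀.const_mul _) (hT₁.const_mul _),
    ← integral_add hT₀₁ (hT₂.const_mul _), ← integral_const_mul,
    ← integral_sub hT (hB.const_mul _)]
  refine (isStable_iff.1 h _ hφ).trans (integral_mono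
    (hφ.integrable_stabilityDensity hv hp.le hlam) (hT.sub (hB.const_mul _)) fun x => ?_)
  exact stabilityDensity_le hp hlam hγ (by lia) (hv.differentiable one_ne_zero x)
    (htest.differentiableAt x) (hη.nonneg x)

lemma exists_integral_mixedTerm_le (hp : 0 < p) (hlam : p - 1 < lam) (hγ : 1 ≤ γ)
    (hm : cutoffExponent p lam γ ≤ 2 * m) {i : ℕ} (hi : 0 < i) (hip : (i : ℝ) < p) {ε : ℝ}
    (hε : 0 < ε) :
    ∃ C : ℝ, 0 < C ∧ ∀ (U : Set E) (v η : E → ℝ), ContDiff ℝ 1 v → IsCutoff U η →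
      ∫ x, mixedTerm p γ m v η i x ≤
        ε * ((∫ x, mixedTerm p γ m v η 0 x) + ∫ x, powerMass (lam + γ) m v η x) +
          C * ∫ x, ‖∇ η x‖ ^ cutoffExponent p lam γ := by
  have hs := lt_cutoffExponent hp hlam (by linarith : 1 - p < γ)
  have him : i < 2 * m := by
    have : (i : ℝ) < 2 * m := by linarith
    exact_mod_cast this
  obtain ⟨C, hC, hle⟩ := exists_mixedTerm_le (E := E) hp hlam hγ hm hi hip hε
  refine ⟨C, hC, fun U v η hv hη => ?_⟩
  have htest := hη.toIsTestFunction
  have hT₀ := htest.integrable_mixedTerm (p := p) (i := 0) hv hγ (by simpa using hp.le)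
    (by lia : 0 < 2 * m)
  have hB := htest.integrable_powerMass (m := m) hv.continuous (by linarith : 0 ≤ lam + γ)
    (by lia)
  have hD := htest.integrable_norm_gradient_rpow (hp.trans hs)
  have hT₀B : Integrable fun x => ε * (mixedTerm p γ m v η 0 x + powerMass (lam + γ) m v η x) :=
    (hT₀.add hB).const_mul ε
  rw [← integral_add hT₀ hB, ← integral_const_mul, ← integral_const_mul,
    ← integral_add hT₀B (hD.const_mul C)]
  exact integral_mono (htest.integrable_mixedTerm hv hγ hip.le him) (hT₀B.add (hD.const_mul C))
    fun x => hle v η x (hη.nonneg x) (hη.le_one x)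

lemma exists_pos_mul_add_le {D γ lam : ℝ} (hD : 0 < D) (hγ : 0 < γ) (h : D < lam * γ) :
    ∃ w c : ℝ, 0 < w ∧ 0 < c ∧ ∀ A B : ℝ, 0 ≤ A → 0 ≤ B →
      c * (A + B) ≤ (lam - w) * B + (w * γ - D) * A := by
  obtain ⟨w, hDw, hwlam⟩ := exists_between ((div_lt_iff₀ hγ).2 h)
  refine ⟨w, min (lam - w) (w * γ - D), (div_pos hD hγ).trans hDw,
    lt_min (sub_pos.2 hwlam) (sub_pos.2 ((div_lt_iff₀ hγ).1 hDw)), fun A B hA hB => ?_⟩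
  linarith [mul_le_mul_of_nonneg_right (min_le_left (lam - w) (w * γ - D)) hB,
    mul_le_mul_of_nonneg_right (min_le_right (lam - w) (w * γ - D)) hA]

-- A positive combination of the tested equation and the stability inequality is coercive.
lemma exists_integral_add_le (hp : 2 < p) (hlam : 1 ≤ lam) (hγ : 1 ≤ γ)
    (hcond : (p - 1) * ((γ + 1) / 2) ^ 2 < lam * γ) (hm : 1 < m) :
    ∃ K : ℝ, 0 < K ∧ ∀ (U : Set E) (v η : E → ℝ), IsOpen U → IsStableSolution p lam v U →
      IsCutoff U η →
      (∫ x, mixedTerm p γ m v η 0 x) + ∫ x, powerMass (lam + γ) m v η x ≤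
        K * ((∫ x, mixedTerm p γ m v η 1 x) + ∫ x, mixedTerm p γ m v η 2 x) := by
  have : 0 < p - 1 := by linarith
  obtain ⟨w, c, hw, hc, hcoercive⟩ := exists_pos_mul_add_le (by positivity) (by linarith) hcond
  obtain ⟨K₁, hK₁⟩ : ∃ K, K = w * (2 * m) + (p - 1) * (2 * ((γ + 1) / 2) * m) := ⟨_, rfl⟩
  obtain ⟨K₂, hK₂⟩ : ∃ K, K = (p - 1) * (m : ℝ) ^ 2 := ⟨_, rfl⟩
  have hK₁_pos : 0 < K₁ := by rw [hK₁]; positivity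
  have hK₂_pos : 0 < K₂ := by rw [hK₂]; positivity
  refine ⟨(K₁ + K₂) / c, by positivity, fun U v η hU hv hη => ?_⟩
  have hT_nonneg (i : ℕ) : 0 ≤ ∫ x, mixedTerm p γ m v η i x :=
    integral_nonneg fun x => mixedTerm_nonneg (hη.nonneg x)
  have hweak := mul_le_mul_of_nonneg_left (hv.isWeakSolution.integral_mixedTerm_sub_le
    hv.contDiff hU hp.le hlam hγ (by lia : m ≠ 0) hη) hw.le
  have hstable := hv.isStable.integral_powerMass_le hv.contDiff hp hlam hγ hm hη
  have hsum : c * ((∫ x, mixedTerm p γ m v η 0 x) + ∫ x, powerMass (lam + γ) m v η x) ≤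
      K₁ * (∫ x, mixedTerm p γ m v η 1 x) + K₂ * ∫ x, mixedTerm p γ m v η 2 x := by
    refine (hcoercive _ _ (hT_nonneg 0) (integral_nonneg fun x => powerMass_nonneg)).trans ?_
    rw [hK₁, hK₂]
    linarith
  rw [div_mul_eq_mul_div, le_div_iff₀' hc]
  linarith [mul_nonneg hK₁_pos.le (hT_nonneg 2), mul_nonneg hK₂_pos.le (hT_nonneg 1)]

lemma exists_integral_powerMass_le (hp : 2 < p) (hlam : p - 1 < lam) (hγ : 1 ≤ γ)
    (hcond : (p - 1) * ((γ + 1) / 2) ^ 2 < lam * γ) :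
    ∃ C : ℝ, 0 < C ∧ ∃ m : ℕ, m ≠ 0 ∧ ∀ (U : Set E) (v η : E → ℝ), IsOpen U →
      IsStableSolution p lam v U → IsCutoff U η →
      ∫ x, powerMass (lam + γ) m v η x ≤ C * ∫ x, ‖∇ η x‖ ^ cutoffExponent p lam γ := by
  have hs := lt_cutoffExponent (by linarith) hlam (by linarith : 1 - p < γ)
  obtain ⟨m, hm⟩ := exists_nat_ge (cutoffExponent p lam γ / 2)
  have hm' : cutoffExponent p lam γ ≤ 2 * m := by linarith
  have hm₁ : 1 < m := by
    have : (1 : ℝ) < m := by linarith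
    exact_mod_cast this
  obtain ⟨K, hK, hcoercive⟩ := exists_integral_add_le (E := E) hp (by linarith) hγ hcond hm₁
  have hε : 0 < (4 * K)⁻¹ := by positivity
  obtain ⟨C₁, hC₁, hT₁⟩ := exists_integral_mixedTerm_le (E := E) (i := 1) (by linarith) hlam hγ
    hm' one_pos (by push_cast; linarith) hε
  obtain ⟨C₂, hC₂, hT₂⟩ := exists_integral_mixedTerm_le (E := E) (i := 2) (by linarith) hlam hγ
    hm' two_pos (by push_cast; linarith) hε
  refine ⟨2 * K * (C₁ + C₂), by positivity, m, by lia, fun U v η hU hv hη => ?_⟩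
  have hT₀_nonneg : 0 ≤ ∫ x, mixedTerm p γ m v η 0 x :=
    integral_nonneg fun x => mixedTerm_nonneg (hη.nonneg x)
  have hmain := (hcoercive U v η hU hv hη).trans (mul_le_mul_of_nonneg_left
    (add_le_add (hT₁ U v η hv.contDiff hη) (hT₂ U v η hv.contDiff hη)) hK.le)
  have hquarter : K * (4 * K)⁻¹ = 1 / 4 := by field_simp
  linear_combination 2 * hmain + hT₀_nonneg + 4 * ((∫ x, mixedTerm p γ m v η 0 x) +
    ∫ x, powerMass (lam + γ) m v η x) * hquarter

end StabilityEstimateIntegrated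

section ExponentChoice

variable {p lam γ : ℝ} {N : ℕ}

-- `S` and `s` stand for square roots; the claim is that `μ` lies below the larger root of the
-- quadratic obtained by squaring `A μ - p² c = 2 p S`.
lemma mul_lt_sq_mul_add_two_mul {A c μ S s : ℝ} (hp : 2 < p) (hc : 0 < c) (hμ : 0 < μ)
    (hS : 0 < S) (hS_sq : S ^ 2 = (μ + c) * μ) (hs : 0 ≤ s) (hs_sq : s ^ 2 = A + 1 + p ^ 2)
    (hA : 2 * p < A → μ * ((A + 2 * p) * (A - 2 * p)) < c * (p ^ 2 * (A + 2 + 2 * s))) :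
    A * μ < p ^ 2 * c + 2 * p * S := by
  by_contra! hX
  have hμS : μ < S := lt_of_pow_lt_pow_left₀ 2 hS.le (by nlinarith [mul_pos hμ hc])
  have hlarge : p ^ 2 * c < (A - 2 * p) * μ := by nlinarith
  have hA_pos : 0 < A - 2 * p :=
    (pos_iff_pos_of_mul_pos ((by positivity : 0 < p ^ 2 * c).trans hlarge)).2 hμ
  have hW : 0 < (A + 2 * p) * (A - 2 * p) := mul_pos (by linarith) hA_pos
  have hsq : (2 * p * S) ^ 2 ≤ (A * μ - p ^ 2 * c) ^ 2 :=
    pow_le_pow_left₀ (by positivity) (by linarith) 2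
  have hdiscr : (p ^ 2 * c * (2 * s)) ^ 2 ≤
      ((A + 2 * p) * (A - 2 * p) * μ - p ^ 2 * c * (A + 2)) ^ 2 := by
    linear_combination (A + 2 * p) * (A - 2 * p) * hsq + 4 * (p ^ 2 * c) ^ 2 * hs_sq -
      4 * p ^ 2 * ((A + 2 * p) * (A - 2 * p)) * hS_sq
  rcases le_abs.1 ((le_abs_self _).trans (sq_le_sq.1 hdiscr)) with h | h
  · linarith [hA (by linarith)]
  · have : p ^ 2 * c * (A + 2 * p) < p ^ 2 * c * (A + 2 - 2 * s) := by
      linarith [mul_lt_mul_of_pos_left hlarge (by linarith : 0 < A + 2 * p)]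
    linarith [lt_of_mul_lt_mul_left this (by positivity)]

lemma lt_LambdaC_iff (hp : 2 < p) (hN : p * (p + 3) / (p - 1) < N) :
    lam < LambdaC N p ↔ lam * ((N - p) * ((p - 1) * N - p * (p + 3))) <
      ((p - 1) * N - p) ^ 2 + p ^ 2 * (p - 2) - p ^ 2 * (p - 1) * N +
        2 * p ^ 2 * √((p - 1) * (N - 1)) := by
  have hp₁ : 0 < p - 1 := by linarith
  have hA : 0 < (p - 1) * N - p * (p + 3) := by
    rw [div_lt_iff₀ hp₁] at hN
    linarith
  have hNp : 0 < N - p := pos_of_mul_pos_right (by linarith : 0 < (p - 1) * (N - p)) hp₁.le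
  rw [LambdaC, lt_div_iff₀ (mul_pos hNp hA)]

lemma mul_lt_of_lt_LambdaC (hp : 2 < p) (hlam : p - 1 < lam) (hN : 1 ≤ N)
    (hlam' : p * (p + 3) / (p - 1) < N → lam < LambdaC N p) :
    ((p - 1) * N - p * (p + 1)) * (lam - p + 1) <
      p ^ 2 * (p - 1) + 2 * p * √(lam * (lam - p + 1)) := by
  have hμ : 0 < lam - p + 1 := by linarith
  have hlam₀ : 0 < lam := by linarith
  have hN' : (1 : ℝ) ≤ N := mod_cast hN
  refine mul_lt_sq_mul_add_two_mul (s := √((p - 1) * (N - 1))) hp (by linarith) hμ (by positivity)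
    ?_ (Real.sqrt_nonneg _) ?_ fun hA => ?_
  · rw [Real.sq_sqrt (by positivity)]
    ring
  · rw [Real.sq_sqrt (mul_nonneg (by linarith) (by linarith))]
    ring
  · have hbig : p * (p + 3) / (p - 1) < N := by
      rw [div_lt_iff₀ (by linarith)]
      linarith
    linear_combination mul_lt_mul_of_pos_left ((lt_LambdaC_iff hp hbig).1 (hlam' hbig))
      (by linarith : 0 < p - 1)

lemma sq_mul_lt_of_lt_root (hp : 1 < p) (hlam : p - 1 < lam) (hγ : 1 ≤ γ)
    (hroot : (p - 1) * γ < 2 * lam - (p - 1) + 2 * √(lam * (lam - p + 1))) :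
    (p - 1) * ((γ + 1) / 2) ^ 2 < lam * γ := by
  have hp₁ : 0 < p - 1 := by linarith
  have hμ : 0 < lam - p + 1 := by linarith
  have hlam₀ : 0 < lam := by linarith
  have hS_sq := Real.sq_sqrt (mul_pos hlam₀ hμ).le
  have hS : lam - p + 1 < √(lam * (lam - p + 1)) := Real.lt_sqrt_of_sq_lt (by nlinarith)
  have hother : 0 < (p - 1) * γ - (2 * lam - (p - 1) - 2 * √(lam * (lam - p + 1))) := by
    nlinarith
  refine lt_of_mul_lt_mul_left ?_ hp₁.le
  linear_combination 1 / 4 * mul_pos (sub_pos.2 hroot) hother + hS_sq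

-- `γ` is taken just below the larger root of `(p - 1) ((γ + 1) / 2)² = λ γ`.
lemma exists_lt_cutoffExponent (hp : 2 < p) (hlam : p - 1 < lam) (hN : 1 ≤ N)
    (hlam' : p * (p + 3) / (p - 1) < N → lam < LambdaC N p) :
    ∃ γ : ℝ, 1 ≤ γ ∧ (p - 1) * ((γ + 1) / 2) ^ 2 < lam * γ ∧ (N : ℝ) < cutoffExponent p lam γ := by
  have hp₁ : 0 < p - 1 := by linarith
  have hμ : 0 < lam - p + 1 := by linarith
  have hlam₀ : 0 < lam := by linarith
  have hroot_one : 1 < (2 * lam - (p - 1) + 2 * √(lam * (lam - p + 1))) / (p - 1) := by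
    rw [lt_div_iff₀ hp₁]
    linarith [Real.sqrt_pos.2 (mul_pos hlam₀ hμ)]
  have hroot_N : N * (lam - p + 1) / p - lam <
      (2 * lam - (p - 1) + 2 * √(lam * (lam - p + 1))) / (p - 1) := by
    rw [sub_lt_iff_lt_add, div_add' _ _ _ hp₁.ne', div_lt_div_iff₀ (by linarith) hp₁]
    linear_combination mul_lt_of_lt_LambdaC hp hlam hN hlam'
  obtain ⟨γ, hγ, hγ_root⟩ := exists_between (max_lt hroot_one hroot_N)
  rw [max_lt_iff] at hγ
  refine ⟨γ, hγ.1.le, sq_mul_lt_of_lt_root (by linarith) hlam hγ.1.le ?_, ?_⟩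
  · rw [← lt_div_iff₀' hp₁]
    exact hγ_root
  · rw [cutoffExponent, lt_div_iff₀ hμ, ← div_lt_iff₀' (by linarith : 0 < p)]
    linarith

end ExponentChoice

section Cutoffs

lemma exists_abs_deriv_smoothTransition_le :
    ∃ K, 0 < K ∧ ∀ t, |deriv Real.smoothTransition t| ≤ K := by
  have hsupp : HasCompactSupport (deriv Real.smoothTransition) := by
    refine HasCompactSupport.intro (isCompact_Icc (a := 0) (b := 1)) fun t ht => ?_
    rcases lt_or_ge t 0 with h | h
    · have : Real.smoothTransition =ᶠ[𝓝 t] fun _ => 0 := by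
        filter_upwards [Iio_mem_nhds h] with y hy using Real.smoothTransition.zero_of_nonpos hy.le
      rw [this.deriv_eq, deriv_const]
    · have : Real.smoothTransition =ᶠ[𝓝 t] fun _ => 1 := by
        filter_upwards [Ioi_mem_nhds (not_le.1 fun h' => ht ⟨h, h'⟩)] with y hy using
          Real.smoothTransition.one_of_one_le (le_of_lt hy)
      rw [this.deriv_eq, deriv_const]
  obtain ⟨K, hK⟩ := hsupp.exists_bound_of_continuous
    (Real.smoothTransition.contDiff.continuous_deriv le_rfl)
  exact ⟨max K 1, by positivity, fun t => (hK t).trans (le_max_left _ _)⟩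

variable {E : Type*} [NormedAddCommGroup E] [InnerProductSpace ℝ E]

lemma norm_gradient_smoothTransition_le [CompleteSpace E] {K r R : ℝ} {x : E}
    (hK : ∀ t, |deriv Real.smoothTransition t| ≤ K) (hr : 0 ≤ r) (hrR : r < R) (hx : ‖x‖ ≤ R) :
    ‖∇ (fun y : E => Real.smoothTransition ((R ^ 2 - ‖y‖ ^ 2) / (R ^ 2 - r ^ 2))) x‖ ≤
      2 * K / (R - r) := by
  have hD : 0 < R ^ 2 - r ^ 2 := by nlinarith
  have hfderiv : HasFDerivAt
      (fun y : E => Real.smoothTransition ((R ^ 2 - ‖y‖ ^ 2) / (R ^ 2 - r ^ 2))) _ x :=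
    (Real.smoothTransition.contDiff.differentiable one_ne_zero _).hasDerivAt.comp_hasFDerivAt x
      (((hasStrictFDerivAt_norm_sq x).hasFDerivAt.const_sub (R ^ 2)).mul_const
        (R ^ 2 - r ^ 2)⁻¹)
  have hsq : ‖(2 : ℕ) • innerSL ℝ x‖ ≤ 2 * R := by
    rw [two_nsmul]
    refine (norm_add_le _ _).trans ?_
    rw [innerSL_apply_norm]
    linarith
  rw [norm_gradient, hfderiv.fderiv, norm_smul, norm_smul, norm_neg, Real.norm_eq_abs,
    norm_inv, Real.norm_of_nonneg hD.le]
  calc |deriv Real.smoothTransition _| * ((R ^ 2 - r ^ 2)⁻¹ * ‖(2 : ℕ) • innerSL ℝ x‖)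
      ≤ K * (((R - r) * (R + r))⁻¹ * (2 * (R + r))) := by
        rw [show R ^ 2 - r ^ 2 = (R - r) * (R + r) by ring] at hD ⊢
        gcongr
        · exact (abs_nonneg _).trans (hK 0)
        · exact hK _
        · linarith
    _ = 2 * K / (R - r) := by
        have : R - r ≠ 0 := by linarith
        have : R + r ≠ 0 := by linarith
        field_simp

lemma exists_isCutoff [FiniteDimensional ℝ E] : ∃ K, 0 < K ∧ ∀ r R, 0 ≤ r → r < R →
    ∃ η : E → ℝ, IsCutoff (closedBall 0 R) η ∧ (∀ x ∈ closedBall (0 : E) r, η x = 1) ∧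
      ∀ x, ‖∇ η x‖ ≤ K / (R - r) := by
  obtain ⟨K, hK, hderiv⟩ := exists_abs_deriv_smoothTransition_le
  refine ⟨2 * K, by positivity, fun r R hr hrR => ?_⟩
  have hD : 0 < R ^ 2 - r ^ 2 := by nlinarith
  set η : E → ℝ := fun x => Real.smoothTransition ((R ^ 2 - ‖x‖ ^ 2) / (R ^ 2 - r ^ 2))
  have hsupp : tsupport η ⊆ closedBall 0 R := by
    refine closure_minimal (fun x hx => ?_) isClosed_closedBall
    contrapose! hx
    rw [mem_closedBall_zero_iff, not_le] at hx
    rw [Function.notMem_support]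
    exact Real.smoothTransition.zero_of_nonpos
      (div_nonpos_of_nonpos_of_nonneg (by nlinarith) hD.le)
  refine ⟨η, ⟨⟨?_, (isCompact_closedBall 0 R).of_isClosed_subset (isClosed_tsupport _) hsupp,
    hsupp⟩, fun x => Real.smoothTransition.nonneg _, fun x => Real.smoothTransition.le_one _⟩,
    fun x hx => ?_, fun x => ?_⟩
  · exact Real.smoothTransition.contDiff.comp
      ((contDiff_const.sub (contDiff_norm_sq ℝ)).div_const _)
  · rw [mem_closedBall_zero_iff] at hx
    refine Real.smoothTransition.one_of_one_le ((one_le_div hD).2 ?_)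
    gcongr
  · by_cases hx : x ∈ tsupport η
    · exact norm_gradient_smoothTransition_le hderiv hr hrR
        (mem_closedBall_zero_iff.1 (hsupp hx))
    · rw [gradient_eq_zero_of_notMem_tsupport hx, norm_zero]
      exact div_nonneg (by positivity) (by linarith)

end Cutoffs

section Smallness

variable {E : Type*} [NormedAddCommGroup E] [InnerProductSpace ℝ E] {U V : Set E} {η v : E → ℝ}
  {x x₀ y : E} {c p lam γ s K R δ : ℝ}

lemma IsCutoff.mono (hη : IsCutoff U η) (h : U ⊆ V) : IsCutoff V η :=
  { hη with toIsTestFunction := hη.toIsTestFunction.mono h }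

lemma half_le_abs_of_norm_gradient_le [CompleteSpace E] (hv : Differentiable ℝ v)
    (hU : Convex ℝ U) (hK : 0 < K) (hgrad : ∀ x ∈ U, ‖∇ v x‖ ≤ K)
    (hx : x ∈ U) (hy : y ∈ U) (hxy : dist y x ≤ δ / (2 * K))
    (hδ : δ ≤ |v x|) : δ / 2 ≤ |v y| := by
  have hlip := hU.norm_image_sub_le_of_norm_fderiv_le (𝕜 := ℝ) (fun z _ => hv z)
    (fun z hz => (norm_gradient v z).symm.trans_le (hgrad z hz)) hx hy
  have hsmall : K * ‖y - x‖ ≤ δ / 2 :=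
    calc K * ‖y - x‖ ≤ K * (δ / (2 * K)) := by rw [← dist_eq_norm]; gcongr
      _ = δ / 2 := by field_simp
  have htri : |v x| - |v y| ≤ ‖v y - v x‖ := by
    rw [Real.norm_eq_abs, abs_sub_comm]
    exact abs_sub_abs_le_abs_sub _ _
  linarith

variable [FiniteDimensional ℝ E] [MeasurableSpace E] [BorelSpace E]

lemma mul_volume_ball_le_integral {f : E → ℝ} (hf : Integrable f) (hf₀ : ∀ x, 0 ≤ f x)
    (h : ∀ y ∈ ball x₀ R, c ≤ f y) : c * volume.real (ball (0 : E) R) ≤ ∫ x, f x :=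
  calc c * volume.real (ball (0 : E) R) = ∫ _ in ball x₀ R, c := by
        rw [setIntegral_const, smul_eq_mul, Measure.addHaar_real_ball_center volume x₀, mul_comm]
    _ ≤ ∫ x in ball x₀ R, f x :=
        setIntegral_mono_on (integrableOn_const measure_ball_lt_top.ne) hf.integrableOn
          measurableSet_ball h
    _ ≤ ∫ x, f x := setIntegral_le_integral hf (Eventually.of_forall hf₀)

lemma IsTestFunction.integral_norm_gradient_rpow_le (hη : IsTestFunction (closedBall 0 R) η)
    (hK : ∀ x, ‖∇ η x‖ ≤ K) (hs : 0 < s) :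
    ∫ x, ‖∇ η x‖ ^ s ≤ K ^ s * volume.real (closedBall (0 : E) R) := by
  rw [← setIntegral_eq_integral_of_forall_compl_eq_zero (s := closedBall 0 R) fun x hx => by
    rw [gradient_eq_zero_of_notMem_tsupport fun h => hx (hη.tsupport_subset h), norm_zero,
      Real.zero_rpow hs.ne']]
  refine (Real.le_norm_self _).trans
    (norm_setIntegral_le_of_norm_le_const measure_closedBall_lt_top fun x _ => ?_)
  rw [Real.norm_of_nonneg (by positivity)]
  exact Real.rpow_le_rpow (norm_nonneg _) (hK x) hs.le

lemma tendsto_div_rpow_mul_volume_closedBall (hK : 0 ≤ K) (hs : finrank ℝ E < s) :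
    Tendsto (fun R => (K / R) ^ s * volume.real (closedBall (0 : E) (2 * R))) atTop (𝓝 0) := by
  have hlim := (tendsto_rpow_neg_atTop (sub_pos.2 hs)).const_mul
    (K ^ s * 2 ^ finrank ℝ E * volume.real (ball (0 : E) 1))
  rw [mul_zero] at hlim
  refine hlim.congr' ?_
  filter_upwards [eventually_gt_atTop 0] with R hR
  rw [Measure.addHaar_real_closedBall _ _ (by positivity), neg_sub, Real.rpow_sub hR,
    Real.rpow_natCast, Real.div_rpow hK hR.le, mul_pow]
  ring

lemma exists_isCutoff_integral_powerMass_lt (hp : 2 < p) (hlam : p - 1 < lam) (hγ : 1 ≤ γ)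
    (hcond : (p - 1) * ((γ + 1) / 2) ^ 2 < lam * γ)
    (hdim : finrank ℝ E < cutoffExponent p lam γ) :
    ∃ m : ℕ, m ≠ 0 ∧ ∀ ε > 0, ∀ᶠ R in atTop, ∃ η : E → ℝ, IsCutoff (closedBall 0 (2 * R)) η ∧
      (∀ x ∈ closedBall (0 : E) R, η x = 1) ∧
      ∀ v, IsStableSolution p lam v (ball 0 (3 * R)) → ∫ x, powerMass (lam + γ) m v η x < ε := by
  obtain ⟨C, hC, m, hm, hmass⟩ := exists_integral_powerMass_le (E := E) hp hlam hγ hcond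
  obtain ⟨K, hK, hcutoff⟩ := exists_isCutoff (E := E)
  have hlim := (tendsto_div_rpow_mul_volume_closedBall (E := E) hK.le hdim).const_mul C
  rw [mul_zero] at hlim
  refine ⟨m, hm, fun ε hε => ?_⟩
  filter_upwards [hlim.eventually (gt_mem_nhds hε), eventually_gt_atTop 0] with R hRsmall hR
  obtain ⟨η, hη, hη₁, hηgrad⟩ := hcutoff R (2 * R) hR.le (by linarith)
  refine ⟨η, hη, hη₁, fun v hv => ?_⟩
  refine (hmass _ _ _ isOpen_ball hv
    (hη.mono (closedBall_subset_ball (by linarith)))).trans_lt (lt_of_le_of_lt ?_ hRsmall)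
  rw [show 2 * R - R = R by ring] at hηgrad
  gcongr
  exact hη.toIsTestFunction.integral_norm_gradient_rpow_le hηgrad
    ((Nat.cast_nonneg _).trans_lt hdim)

lemma exists_radius_abs_le (hp : 2 < p) (hlam : p - 1 < lam) (hγ : 1 ≤ γ)
    (hcond : (p - 1) * ((γ + 1) / 2) ^ 2 < lam * γ)
    (hdim : finrank ℝ E < cutoffExponent p lam γ) (hK : 0 < K) (hδ : 0 < δ) :
    ∃ R₀, 4 < R₀ ∧ ∀ v : E → ℝ, IsStableSolution p lam v (ball 0 R₀) →
      (∀ x ∈ ball (0 : E) R₀, ‖∇ v x‖ ≤ K) → ∀ x ∈ ball (0 : E) 4, |v x| ≤ δ := by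
  obtain ⟨m, hm, hmass⟩ := exists_isCutoff_integral_powerMass_lt (E := E) hp hlam hγ hcond hdim
  set r := min 1 (δ / (2 * K))
  have hr₀ : 0 < r := lt_min one_pos (by positivity)
  have hball : 0 < volume.real (ball (0 : E) r) :=
    ENNReal.toReal_pos (measure_ball_pos _ _ hr₀).ne' measure_ball_lt_top.ne
  obtain ⟨R, ⟨η, hη, hη₁, hupper⟩, hR⟩ := ((hmass
    ((δ / 2) ^ (lam + γ) * volume.real (ball (0 : E) r)) (by positivity)).and
    (eventually_ge_atTop 5)).exists
  refine ⟨3 * R, by linarith, fun v hv hgrad x₀ hx₀ => ?_⟩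
  specialize hupper v hv
  contrapose! hupper
  refine mul_volume_ball_le_integral (x₀ := x₀)
    (hη.integrable_powerMass hv.contDiff.continuous (by linarith) hm)
    (fun x => powerMass_nonneg) fun y hy => ?_
  rw [mem_ball_zero_iff] at hx₀
  rw [mem_ball] at hy
  have hy₅ : ‖y‖ < 5 := by
    have := dist_triangle y x₀ 0
    rw [dist_zero_right, dist_zero_right] at this
    linarith [min_le_left 1 (δ / (2 * K))]
  have hvy := half_le_abs_of_norm_gradient_le (hv.contDiff.differentiable one_ne_zero)
    (convex_ball 0 (3 * R)) hK hgrad (mem_ball_zero_iff.2 (by linarith))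
    (mem_ball_zero_iff.2 (by linarith)) (hy.le.trans (min_le_right _ _)) hupper.le
  rw [powerMass, hη₁ y (mem_closedBall_zero_iff.2 (by linarith)), one_pow, mul_one]
  gcongr
  linarith

end Smallness

section Sobolev

variable {E : Type*} [NormedAddCommGroup E] [InnerProductSpace ℝ E] [FiniteDimensional ℝ E]
  [MeasurableSpace E] [BorelSpace E] {U : Set E} {g : E → ℝ} {χ C : ℝ}

lemma IsTestFunction.lintegral_enorm_fderiv (hg : IsTestFunction U g) :
    ∫⁻ x, ‖fderiv ℝ g x‖ₑ = ENNReal.ofReal (∫ x, ‖∇ g x‖) := by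
  have hint : Integrable fun x => ‖∇ g x‖ := by
    simpa only [Real.rpow_one] using hg.integrable_norm_gradient_rpow one_pos
  rw [ofReal_integral_eq_lintegral_ofReal hint (Eventually.of_forall fun x => norm_nonneg _)]
  simp only [norm_gradient, ofReal_norm]

lemma IsTestFunction.integral_rpow_le_of_lintegral_le (hg : IsTestFunction U g)
    (hg₀ : ∀ x, 0 ≤ g x) (hχ : 0 < χ) (hC : 0 ≤ C)
    (h : ∫⁻ x, ‖g x‖ₑ ^ χ ≤ ENNReal.ofReal C * (∫⁻ x, ‖fderiv ℝ g x‖ₑ) ^ χ) :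
    ∫ x, g x ^ χ ≤ C * (∫ x, ‖∇ g x‖) ^ χ := by
  have hgrad : 0 ≤ ∫ x, ‖∇ g x‖ := integral_nonneg fun x => norm_nonneg _
  have hint : Integrable fun x => g x ^ χ :=
    integrable_of_eq_zero_off_tsupport (hg.contDiff.continuous.rpow_const fun _ => Or.inr hχ.le)
      hg.hasCompactSupport fun x hx => by
        rw [image_eq_zero_of_notMem_tsupport hx, Real.zero_rpow hχ.ne']
  have hlintegral : ∫⁻ x, ‖g x‖ₑ ^ χ = ENNReal.ofReal (∫ x, g x ^ χ) := by
    rw [ofReal_integral_eq_lintegral_ofReal hint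
      (Eventually.of_forall fun x => Real.rpow_nonneg (hg₀ x) _)]
    congr 1 with x
    rw [Real.enorm_of_nonneg (hg₀ x), ENNReal.ofReal_rpow_of_nonneg (hg₀ x) hχ.le]
  rwa [hg.lintegral_enorm_fderiv, ENNReal.ofReal_rpow_of_nonneg hgrad hχ.le,
    ← ENNReal.ofReal_mul hC, hlintegral, ENNReal.ofReal_le_ofReal_iff (by positivity)] at h

lemma enorm_le_lintegral_enorm_fderiv (hE : finrank ℝ E = 1) (hg : ContDiff ℝ 1 g)
    (hc : HasCompactSupport g) (x : E) : ‖g x‖ₑ ≤ ∫⁻ y, ‖fderiv ℝ g y‖ₑ := by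
  let e : ℝ ≃ₗᵢ[ℝ] E := (stdOrthonormalBasis ℝ ℝ).equiv (stdOrthonormalBasis ℝ E)
    (finCongr (by rw [finrank_self, hE]))
  obtain ⟨t, rfl⟩ := e.surjective x
  have hderiv : ∀ s, ‖deriv (g ∘ e) s‖ₑ ≤ ‖fderiv ℝ g (e s)‖ₑ := by
    intro s
    have hd : HasDerivAt (g ∘ e) (fderiv ℝ g (e s) (e 1)) s :=
      (hg.differentiable one_ne_zero (e s)).hasFDerivAt.comp_hasDerivAt s
        (e.toContinuousLinearEquiv.hasFDerivAt (x := s)).hasDerivAt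
    have he : ‖e 1‖ₑ = 1 := by rw [← ofReal_norm, e.norm_map, norm_one, ENNReal.ofReal_one]
    simpa only [hd.deriv, he, mul_one] using (fderiv ℝ g (e s)).le_opENorm (e 1)
  calc ‖g (e t)‖ₑ ≤ ∫⁻ s in Iic t, ‖deriv (g ∘ e) s‖ₑ :=
        (hc.comp_homeomorph e.toHomeomorph).enorm_le_lintegral_Ici_deriv
          (hg.comp e.toContinuousLinearEquiv.contDiff) t
    _ ≤ ∫⁻ s, ‖deriv (g ∘ e) s‖ₑ := setLIntegral_le_lintegral _ _
    _ ≤ ∫⁻ s, ‖fderiv ℝ g (e s)‖ₑ := lintegral_mono hderiv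
    _ = ∫⁻ y, ‖fderiv ℝ g y‖ₑ := e.measurePreserving.lintegral_comp
        (hg.continuous_fderiv one_ne_zero).enorm.measurable

lemma exists_integral_rpow_le_of_finrank_eq_one (hE : finrank ℝ E = 1) (hU : volume U ≠ ⊤) :
    ∃ C : ℝ, 0 ≤ C ∧ ∀ g : E → ℝ, IsTestFunction U g → (∀ x, 0 ≤ g x) →
      ∫ x, g x ^ (2 : ℝ) ≤ C * (∫ x, ‖∇ g x‖) ^ (2 : ℝ) := by
  refine ⟨volume.real U, by positivity, fun g hg hg₀ =>
    hg.integral_rpow_le_of_lintegral_le hg₀ two_pos (by positivity) ?_⟩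
  set I := ∫⁻ y, ‖fderiv ℝ g y‖ₑ
  calc ∫⁻ x, ‖g x‖ₑ ^ (2 : ℝ) = ∫⁻ x in tsupport g, ‖g x‖ₑ ^ (2 : ℝ) := by
        refine (setLIntegral_eq_of_support_subset fun x hx => ?_).symm
        contrapose! hx
        simp [image_eq_zero_of_notMem_tsupport hx]
    _ ≤ ∫⁻ _ in tsupport g, I ^ (2 : ℝ) := lintegral_mono fun x => ENNReal.rpow_le_rpow
        (enorm_le_lintegral_enorm_fderiv hE hg.contDiff hg.hasCompactSupport x) zero_le_two
    _ = volume (tsupport g) * I ^ (2 : ℝ) := by rw [setLIntegral_const, mul_comm]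
    _ ≤ ENNReal.ofReal (volume.real U) * I ^ (2 : ℝ) := by
        rw [ofReal_measureReal hU]
        gcongr
        exact hg.tsupport_subset

lemma exists_integral_rpow_le (hE : 1 ≤ finrank ℝ E) (hU : volume U ≠ ⊤) :
    ∃ χ : ℝ, 1 < χ ∧ ∃ C : ℝ, 0 ≤ C ∧ ∀ g : E → ℝ, IsTestFunction U g → (∀ x, 0 ≤ g x) →
      ∫ x, g x ^ χ ≤ C * (∫ x, ‖∇ g x‖) ^ χ := by
  rcases hE.eq_or_lt with hE | hE
  · exact ⟨2, one_lt_two, exists_integral_rpow_le_of_finrank_eq_one hE.symm hU⟩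
  · have hconj := Real.HolderConjugate.conjExponent (by exact_mod_cast hE : (1 : ℝ) < finrank ℝ E)
    refine ⟨Real.conjExponent (finrank ℝ E), hconj.symm.lt,
      lintegralPowLePowLIntegralFDerivConst (volume : Measure E) (Real.conjExponent (finrank ℝ E)),
      NNReal.coe_nonneg _, fun g hg hg₀ => ?_⟩
    refine hg.integral_rpow_le_of_lintegral_le hg₀ hconj.symm.pos (NNReal.coe_nonneg _) ?_
    rw [ENNReal.ofReal_coe_nnreal]
    exact lintegral_pow_le_pow_lintegral_fderiv volume hg.contDiff hg.hasCompactSupport hconj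

end Sobolev

section GeometricDecay

variable {D b α θ : ℝ}

lemma le_pow_mul_of_le_geometric_mul_rpow {Y : ℕ → ℝ} (hD : 0 ≤ D) (hb : 0 < b) (hα : 0 ≤ α)
    (hθ : 0 < θ) (hbθ : b * θ ^ α = 1) (hY : ∀ j, 0 ≤ Y j)
    (hstep : ∀ j, Y (j + 1) ≤ D * b ^ j * Y j ^ (1 + α)) (hY₀ : D * Y 0 ^ α ≤ θ) (j : ℕ) :
    Y j ≤ θ ^ j * Y 0 := by
  induction j with
  | zero => rw [pow_zero, one_mul]
  | succ j ih =>
    have hYj := hY j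
    have hY0 := hY 0
    calc Y (j + 1) ≤ D * b ^ j * Y j ^ (1 + α) := hstep j
      _ = D * b ^ j * (Y j * Y j ^ α) := by
          rw [Real.rpow_add_of_nonneg hYj zero_le_one hα, Real.rpow_one]
      _ ≤ D * b ^ j * (θ ^ j * Y 0 * (θ ^ j * Y 0) ^ α) := by gcongr
      _ = D * Y 0 ^ α * (b * θ ^ α) ^ j * (θ ^ j * Y 0) := by
          rw [Real.mul_rpow (by positivity) hY0, mul_pow, Real.rpow_pow_comm hθ.le]
          ring
      _ = D * Y 0 ^ α * (θ ^ j * Y 0) := by rw [hbθ, one_pow, mul_one]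
      _ ≤ θ * (θ ^ j * Y 0) := by gcongr
      _ = θ ^ (j + 1) * Y 0 := by ring

lemma exists_tendsto_zero_of_le_geometric_mul_rpow (hD : 0 < D) (hb : 1 < b) (hα : 0 < α) :
    ∃ ε > 0, ∀ Y : ℕ → ℝ, (∀ j, 0 ≤ Y j) →
      (∀ j, Y (j + 1) ≤ D * b ^ j * Y j ^ (1 + α)) → Y 0 ≤ ε → Tendsto Y atTop (𝓝 0) := by
  have hb₀ : 0 < b := one_pos.trans hb
  set θ := b ^ (-α⁻¹)
  have hθ : 0 < θ := by positivity
  have hθ₁ : θ < 1 := Real.rpow_lt_one_of_one_lt_of_neg hb (by simpa using hα)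
  have hbθ : b * θ ^ α = 1 := by
    rw [← Real.rpow_mul hb₀.le, neg_mul, inv_mul_cancel₀ hα.ne', Real.rpow_neg_one,
      mul_inv_cancel₀ hb₀.ne']
  refine ⟨(θ / D) ^ α⁻¹, by positivity, fun Y hY hstep hY₀ => ?_⟩
  have hsmall : D * Y 0 ^ α ≤ θ := by
    rwa [← le_div_iff₀' hD, ← Real.le_rpow_inv_iff_of_pos (hY 0) (by positivity) hα]
  refine squeeze_zero hY
    (le_pow_mul_of_le_geometric_mul_rpow hD.le hb₀ hα.le hθ hbθ hY hstep hsmall) ?_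
  simpa using (tendsto_pow_atTop_nhds_zero_of_lt_one hθ.le hθ₁).mul_const (Y 0)

end GeometricDecay

section LevelEnergy

variable {E : Type*} {w : E → ℝ} {x : E} {ℓ σ χ : ℝ}

/-- The truncation `(w - ℓ)₊`. -/
def excess (ℓ : ℝ) (w : E → ℝ) (x : E) : ℝ := max (w x - ℓ) 0

lemma excess_nonneg : 0 ≤ excess ℓ w x := le_max_right _ _

lemma excess_add_pow_le (hχ : 1 ≤ χ) (hσ : 0 < σ) :
    excess (ℓ + σ) w x ^ 4 + excess (ℓ + σ) w x ^ 3 ≤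
      (1 + 1 / σ) * (σ ^ 4) ^ (1 - χ) * (excess ℓ w x ^ 4) ^ χ := by
  rcases le_or_gt (w x - (ℓ + σ)) 0 with hle | hgt
  · have : 0 ≤ excess ℓ w x := excess_nonneg
    rw [excess, max_eq_right hle]
    simp only [ne_eq, OfNat.ofNat_ne_zero, not_false_eq_true, zero_pow, add_zero]
    positivity
  · have hz' : excess (ℓ + σ) w x = w x - (ℓ + σ) := max_eq_left hgt.le
    have hz : excess ℓ w x = w x - ℓ := max_eq_left (by linarith)
    rw [hz', hz]
    set z := w x - ℓ
    have hσz : σ ≤ z := by linarith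
    have hz₀ : 0 < z := hσ.trans_le hσz
    calc (w x - (ℓ + σ)) ^ 4 + (w x - (ℓ + σ)) ^ 3 ≤ z ^ 4 + z ^ 3 * 1 := by
          rw [mul_one]; gcongr <;> linarith
      _ ≤ z ^ 4 + z ^ 3 * (z / σ) := by gcongr; rwa [one_le_div hσ]
      _ = (1 + 1 / σ) * ((z ^ 4) ^ (1 - χ) * (z ^ 4) ^ χ) := by
          rw [← Real.rpow_add (by positivity), sub_add_cancel, Real.rpow_one]; ring
      _ ≤ (1 + 1 / σ) * ((σ ^ 4) ^ (1 - χ) * (z ^ 4) ^ χ) := by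
          gcongr ?_ * (?_ * ?_)
          exact Real.rpow_le_rpow_of_nonpos (by positivity) (by gcongr) (by linarith)
      _ = (1 + 1 / σ) * (σ ^ 4) ^ (1 - χ) * (z ^ 4) ^ χ := by ring

variable [NormedAddCommGroup E]

lemma continuous_excess (hw : Continuous w) (ℓ : ℝ) : Continuous (excess ℓ w) :=
  (hw.sub continuous_const).max continuous_const

variable [InnerProductSpace ℝ E]

lemma contDiff_excess_pow (hw : ContDiff ℝ 1 w) (ℓ : ℝ) {n : ℕ} (hn : n ≠ 0) :
    ContDiff ℝ 1 fun x => excess ℓ w x ^ (n + 1) :=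
  (contDiff_max_zero_pow hn).comp (hw.sub contDiff_const)

lemma gradient_excess_pow_mul_pow [CompleteSpace E] {η : E → ℝ} (hw : DifferentiableAt ℝ w x)
    (hη : DifferentiableAt ℝ η x) {n : ℕ} (hn : n ≠ 0) (m : ℕ) :
    ∇ (fun y => excess ℓ w y ^ (n + 1) * η y ^ m) x =
      ((n + 1) * excess ℓ w x ^ n * η x ^ m) • ∇ w x +
        (excess ℓ w x ^ (n + 1) * (m * η x ^ (m - 1))) • ∇ η x :=
  gradient_comp_mul_pow (F := fun t => max (t - ℓ) 0 ^ (n + 1)) hw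
    ((hasDerivAt_max_zero_pow hn (w x - ℓ)).comp_sub_const (w x) ℓ) hη m

end LevelEnergy

section DeGiorgi

variable {E : Type*} [NormedAddCommGroup E] [InnerProductSpace ℝ E] {w η : E → ℝ}
  {A k ℓ σ χ r G R : ℝ}

lemma IsCutoff.norm_gradient_excess_pow_four_mul_sq_le [CompleteSpace E] {U : Set E}
    (hη : IsCutoff U η) (hw : ContDiff ℝ 1 w) (hG : ∀ x, ‖∇ η x‖ ≤ G) (x : E) :
    ‖∇ (fun y => excess ℓ w y ^ 4 * η y ^ 2) x‖ ≤
      2 * (excess ℓ w x ^ 2 * ‖∇ w x‖ ^ 2 * η x ^ 2) +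
        3 * (G ^ 2 + 1) * (excess ℓ w x ^ 4 + excess ℓ w x ^ 3) := by
  have hz := excess_nonneg (ℓ := ℓ) (w := w) (x := x)
  have ht := hη.nonneg x
  have ht₁ : η x ^ 2 ≤ 1 := pow_le_one₀ ht (hη.le_one x)
  have hb : ‖∇ η x‖ ^ 2 ≤ G ^ 2 := by gcongr; exact hG x
  rw [gradient_excess_pow_mul_pow (hw.differentiable one_ne_zero x)
    (hη.contDiff.differentiable one_ne_zero x) three_ne_zero]
  refine (norm_add_le _ _).trans ?_
  rw [norm_smul, norm_smul, Real.norm_of_nonneg (by positivity),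
    Real.norm_of_nonneg (by positivity)]
  push_cast
  generalize ‖∇ w x‖ = a, ‖∇ η x‖ = b at *
  generalize excess ℓ w x = z, η x = t at *
  linear_combination 2 * z ^ 2 * t ^ 2 * sq_nonneg (a - z) + z ^ 4 * sq_nonneg (t - b) +
    3 * z ^ 4 * ht₁ + z ^ 4 * hb + 2 * mul_nonneg (sq_nonneg G) (pow_nonneg hz 4) +
    3 * mul_nonneg (add_nonneg (sq_nonneg G) zero_le_one) (pow_nonneg hz 3)

variable [FiniteDimensional ℝ E] [MeasurableSpace E] [BorelSpace E]

/-- The De Giorgi class: `w` satisfies the weighted Caccioppoli inequality at every level above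
`k`. The weight `(w - ℓ)₊²` is the ellipticity of the linearised equation, which is nondegenerate
only where `w` is large. -/
def IsDeGiorgi (A k : ℝ) (w : E → ℝ) : Prop :=
  ∀ ℓ ≥ k, ∀ η : E → ℝ, IsCutoff (closedBall 0 2) η →
    ∫ x, excess ℓ w x ^ 2 * ‖∇ w x‖ ^ 2 * η x ^ 2 ≤
      A * ∫ x, (excess ℓ w x ^ 4 * ‖∇ η x‖ ^ 2 + excess ℓ w x ^ 3 * η x ^ 2)

/-- The quantity iterated over growing levels and shrinking balls. -/
noncomputable def levelEnergy (w : E → ℝ) (ℓ r : ℝ) : ℝ :=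
  ∫ x in closedBall 0 r, (excess ℓ w x ^ 4 + excess ℓ w x ^ 3)

lemma levelEnergy_nonneg : 0 ≤ levelEnergy w ℓ r :=
  integral_nonneg fun x => by
    have hz := excess_nonneg (ℓ := ℓ) (w := w) (x := x)
    simp only [Pi.zero_apply]
    positivity

lemma integrableOn_excess_pow_add_pow (hw : Continuous w) :
    IntegrableOn (fun x => excess ℓ w x ^ 4 + excess ℓ w x ^ 3) (closedBall 0 r) := by
  have hz := continuous_excess hw ℓ
  exact (by fun_prop : Continuous fun x => excess ℓ w x ^ 4 + excess ℓ w x ^ 3).continuousOn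
    |>.integrableOn_compact (isCompact_closedBall 0 r)

lemma IsCutoff.integral_excess_le (hη : IsCutoff (closedBall 0 R) η) (hw : Continuous w)
    (hG : ∀ x, ‖∇ η x‖ ≤ G) :
    ∫ x, (excess ℓ w x ^ 4 * ‖∇ η x‖ ^ 2 + excess ℓ w x ^ 3 * η x ^ 2) ≤
      (G ^ 2 + 1) * levelEnergy w ℓ R := by
  have hz := continuous_excess hw ℓ
  have hη' := continuous_gradient hη.contDiff
  have hηc := hη.contDiff.continuous
  rw [levelEnergy, ← integral_const_mul, ← setIntegral_eq_integral_of_forall_compl_eq_zero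
    (s := closedBall 0 R) fun x hx => ?_]
  · refine setIntegral_mono_on ((by fun_prop : Continuous _).continuousOn.integrableOn_compact
      (isCompact_closedBall 0 R)) ((integrableOn_excess_pow_add_pow hw).const_mul _)
      measurableSet_closedBall fun x _ => ?_
    have hzx := excess_nonneg (ℓ := ℓ) (w := w) (x := x)
    calc excess ℓ w x ^ 4 * ‖∇ η x‖ ^ 2 + excess ℓ w x ^ 3 * η x ^ 2
        ≤ excess ℓ w x ^ 4 * G ^ 2 + excess ℓ w x ^ 3 * 1 := by
          gcongr
          exacts [hG x, pow_le_one₀ (hη.nonneg x) (hη.le_one x)]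
      _ ≤ (G ^ 2 + 1) * (excess ℓ w x ^ 4 + excess ℓ w x ^ 3) := by
          linear_combination pow_nonneg hzx 4 + G ^ 2 * pow_nonneg hzx 3
  · have hx' := fun h => hx (hη.tsupport_subset h)
    rw [image_eq_zero_of_notMem_tsupport hx', gradient_eq_zero_of_notMem_tsupport hx', norm_zero]
    ring

lemma IsDeGiorgi.integral_norm_gradient_le (h : IsDeGiorgi A k w) (hA : 0 ≤ A)
    (hw : ContDiff ℝ 1 w) (hℓ : k ≤ ℓ) (hR : R ≤ 2) (hη : IsCutoff (closedBall 0 R) η)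
    (hG : ∀ x, ‖∇ η x‖ ≤ G) :
    ∫ x, ‖∇ (fun y => excess ℓ w y ^ 4 * η y ^ 2) x‖ ≤
      (2 * A + 3) * (G ^ 2 + 1) * levelEnergy w ℓ R := by
  have hz := continuous_excess hw.continuous ℓ
  have hw' := continuous_gradient hw
  have hηc := hη.contDiff.continuous
  have htest : IsTestFunction (closedBall 0 R) fun y => excess ℓ w y ^ 4 * η y ^ 2 :=
    (hη.toIsTestFunction.pow two_ne_zero).mul_left (contDiff_excess_pow hw ℓ three_ne_zero)
  have hgrad : IntegrableOn (fun x => excess ℓ w x ^ 2 * ‖∇ w x‖ ^ 2 * η x ^ 2)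
      (closedBall 0 R) :=
    (by fun_prop : Continuous _).continuousOn.integrableOn_compact (isCompact_closedBall 0 R)
  have hexc : IntegrableOn (fun x => 3 * (G ^ 2 + 1) * (excess ℓ w x ^ 4 + excess ℓ w x ^ 3))
      (closedBall 0 R) := (integrableOn_excess_pow_add_pow hw.continuous).const_mul _
  have hclass := h ℓ hℓ η (hη.mono (closedBall_subset_closedBall hR))
  calc ∫ x, ‖∇ (fun y => excess ℓ w y ^ 4 * η y ^ 2) x‖
      = ∫ x in closedBall 0 R, ‖∇ (fun y => excess ℓ w y ^ 4 * η y ^ 2) x‖ := by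
        refine (setIntegral_eq_integral_of_forall_compl_eq_zero fun x hx => ?_).symm
        rw [gradient_eq_zero_of_notMem_tsupport fun h => hx (htest.tsupport_subset h), norm_zero]
    _ ≤ ∫ x in closedBall 0 R, (2 * (excess ℓ w x ^ 2 * ‖∇ w x‖ ^ 2 * η x ^ 2) +
          3 * (G ^ 2 + 1) * (excess ℓ w x ^ 4 + excess ℓ w x ^ 3)) :=
        integral_mono_of_nonneg (Eventually.of_forall fun x => norm_nonneg _)
          ((hgrad.const_mul 2).add hexc)
          (Eventually.of_forall (hη.norm_gradient_excess_pow_four_mul_sq_le hw hG))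
    _ = 2 * (∫ x, excess ℓ w x ^ 2 * ‖∇ w x‖ ^ 2 * η x ^ 2) +
          3 * (G ^ 2 + 1) * levelEnergy w ℓ R := by
        rw [integral_add (hgrad.const_mul 2) hexc, integral_const_mul, integral_const_mul,
          setIntegral_eq_integral_of_forall_compl_eq_zero fun x hx => ?_,
          levelEnergy]
        rw [image_eq_zero_of_notMem_tsupport fun h => hx (hη.tsupport_subset h)]
        ring
    _ ≤ 2 * (A * ((G ^ 2 + 1) * levelEnergy w ℓ R)) + 3 * (G ^ 2 + 1) * levelEnergy w ℓ R := by
        gcongr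
        refine hclass.trans ?_
        gcongr
        exact hη.integral_excess_le hw.continuous hG
    _ = (2 * A + 3) * (G ^ 2 + 1) * levelEnergy w ℓ R := by ring

lemma levelEnergy_add_le (hχ : 1 ≤ χ) (hσ : 0 < σ) (hw : Continuous w) {U : Set E}
    (hη : IsCutoff U η) (hη₁ : ∀ x ∈ closedBall (0 : E) r, η x = 1) :
    levelEnergy w (ℓ + σ) r ≤
      (1 + 1 / σ) * (σ ^ 4) ^ (1 - χ) * ∫ x, (excess ℓ w x ^ 4 * η x ^ 2) ^ χ := by
  have hz := continuous_excess hw ℓ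
  have hηc := hη.contDiff.continuous
  have hint : Integrable fun x => (excess ℓ w x ^ 4 * η x ^ 2) ^ χ :=
    integrable_of_eq_zero_off_tsupport
      (Continuous.rpow_const (by fun_prop) fun x => Or.inr (by linarith)) hη.hasCompactSupport
      fun x hx => by
        rw [image_eq_zero_of_notMem_tsupport hx, zero_pow two_ne_zero, mul_zero,
          Real.zero_rpow (by linarith)]
  calc levelEnergy w (ℓ + σ) r
      ≤ ∫ x in closedBall 0 r,
          (1 + 1 / σ) * (σ ^ 4) ^ (1 - χ) * (excess ℓ w x ^ 4 * η x ^ 2) ^ χ := by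
        refine setIntegral_mono_on (integrableOn_excess_pow_add_pow hw)
          (hint.integrableOn.const_mul _) measurableSet_closedBall fun x hx => ?_
        rw [hη₁ x hx, one_pow, mul_one]
        exact excess_add_pow_le hχ hσ
    _ ≤ (1 + 1 / σ) * (σ ^ 4) ^ (1 - χ) * ∫ x, (excess ℓ w x ^ 4 * η x ^ 2) ^ χ := by
        rw [integral_const_mul]
        refine mul_le_mul_of_nonneg_left (setIntegral_le_integral hint
          (Eventually.of_forall fun x => ?_)) (by positivity)
        exact Real.rpow_nonneg (mul_nonneg (pow_nonneg excess_nonneg 4) (sq_nonneg _)) _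

end DeGiorgi

section Iteration

variable {E : Type*} [NormedAddCommGroup E] [InnerProductSpace ℝ E] [FiniteDimensional ℝ E]
  [MeasurableSpace E] [BorelSpace E] {w : E → ℝ} {A k χ K t : ℝ}

lemma levelJump_mul_cutoff_rpow_le (hk : 0 < k) (ht : 1 ≤ t) (hχ : 1 ≤ χ) :
    (1 + 1 / (k / (2 * t))) * ((k / (2 * t)) ^ 4) ^ (1 - χ) * ((K / (1 / (2 * t))) ^ 2 + 1) ^ χ ≤
      (1 + 2 / k) * ((k / 2) ^ 4) ^ (1 - χ) * (4 * K ^ 2 + 1) ^ χ * t ^ (6 * χ - 3) := by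
  have ht₀ : 0 < t := one_pos.trans_le ht
  have hjump : 1 + 1 / (k / (2 * t)) ≤ (1 + 2 / k) * t := by
    have : 1 / (k / (2 * t)) = 2 / k * t := by field_simp
    linarith
  have hlevel : ((k / (2 * t)) ^ 4) ^ (1 - χ) = ((k / 2) ^ 4) ^ (1 - χ) * t ^ (4 * (χ - 1)) := by
    rw [← div_div, div_pow (k / 2), Real.div_rpow (by positivity) (by positivity), div_eq_mul_inv,
      ← Real.rpow_neg (by positivity), neg_sub, ← Real.rpow_natCast t, ← Real.rpow_mul ht₀.le]
    norm_num
  have hcut : ((K / (1 / (2 * t))) ^ 2 + 1) ^ χ ≤ (4 * K ^ 2 + 1) ^ χ * t ^ (2 * χ) := by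
    rw [Real.rpow_mul ht₀.le, Real.rpow_two, ← Real.mul_rpow (by positivity) (by positivity)]
    refine Real.rpow_le_rpow (by positivity) ?_ (by linarith)
    rw [div_div_eq_mul_div, div_one]
    linear_combination one_le_pow₀ (n := 2) ht
  calc _ ≤ (1 + 2 / k) * t * (((k / 2) ^ 4) ^ (1 - χ) * t ^ (4 * (χ - 1))) *
        ((4 * K ^ 2 + 1) ^ χ * t ^ (2 * χ)) := by rw [hlevel]; gcongr
    _ = (1 + 2 / k) * ((k / 2) ^ 4) ^ (1 - χ) * (4 * K ^ 2 + 1) ^ χ *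
        (t ^ (1 : ℝ) * t ^ (4 * (χ - 1)) * t ^ (2 * χ)) := by rw [Real.rpow_one]; ring
    _ = _ := by
        rw [← Real.rpow_add ht₀, ← Real.rpow_add ht₀]
        ring_nf

lemma exists_levelEnergy_add_le (hE : 1 ≤ finrank ℝ E) (hk : 0 < k) (hA : 0 ≤ A) :
    ∃ χ : ℝ, 1 < χ ∧ ∃ D > 0, ∀ w : E → ℝ, ContDiff ℝ 1 w → IsDeGiorgi A k w →
      ∀ ℓ ≥ k, ∀ t ≥ 1, ∀ r ≥ 0, r + 1 / (2 * t) ≤ 2 →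
        levelEnergy w (ℓ + k / (2 * t)) r ≤
          D * t ^ (6 * χ - 3) * levelEnergy w ℓ (r + 1 / (2 * t)) ^ χ := by
  obtain ⟨χ, hχ, S, hS, hsobolev⟩ := exists_integral_rpow_le (E := E) (U := closedBall 0 2) hE
    measure_closedBall_lt_top.ne
  obtain ⟨K, hK, hcutoff⟩ := exists_isCutoff (E := E)
  refine ⟨χ, hχ, (S + 1) * (2 * A + 3) ^ χ *
    ((1 + 2 / k) * ((k / 2) ^ 4) ^ (1 - χ) * (4 * K ^ 2 + 1) ^ χ), by positivity,
    fun w hw hclass ℓ hℓ t ht r hr hr₂ => ?_⟩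
  have : 0 < t := one_pos.trans_le ht
  set R := r + 1 / (2 * t)
  obtain ⟨η, hη, hη₁, hηgrad⟩ := hcutoff r R hr (lt_add_of_pos_right r (by positivity))
  rw [show R - r = 1 / (2 * t) by ring] at hηgrad
  set G := K / (1 / (2 * t))
  have htest : IsTestFunction (closedBall 0 2) fun y => excess ℓ w y ^ 4 * η y ^ 2 :=
    ((hη.toIsTestFunction.pow two_ne_zero).mul_left (contDiff_excess_pow hw ℓ three_ne_zero)).mono
      (closedBall_subset_closedBall hr₂)
  have hY : 0 ≤ levelEnergy w ℓ R := levelEnergy_nonneg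
  calc levelEnergy w (ℓ + k / (2 * t)) r
      ≤ (1 + 1 / (k / (2 * t))) * ((k / (2 * t)) ^ 4) ^ (1 - χ) *
          ∫ x, (excess ℓ w x ^ 4 * η x ^ 2) ^ χ :=
        levelEnergy_add_le hχ.le (by positivity) hw.continuous hη hη₁
    _ ≤ (1 + 1 / (k / (2 * t))) * ((k / (2 * t)) ^ 4) ^ (1 - χ) *
          ((S + 1) * ((2 * A + 3) * (G ^ 2 + 1) * levelEnergy w ℓ R) ^ χ) := by
        gcongr
        refine (hsobolev _ htest fun x =>
          mul_nonneg (pow_nonneg excess_nonneg 4) (sq_nonneg _)).trans ?_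
        gcongr
        · linarith
        · exact hclass.integral_norm_gradient_le hA hw hℓ hr₂ hη hηgrad
    _ = (S + 1) * (2 * A + 3) ^ χ * ((1 + 1 / (k / (2 * t))) * ((k / (2 * t)) ^ 4) ^ (1 - χ) *
          (G ^ 2 + 1) ^ χ) * levelEnergy w ℓ R ^ χ := by
        rw [Real.mul_rpow (by positivity) hY, Real.mul_rpow (by positivity) (by positivity)]
        ring
    _ ≤ (S + 1) * (2 * A + 3) ^ χ * ((1 + 2 / k) * ((k / 2) ^ 4) ^ (1 - χ) *
          (4 * K ^ 2 + 1) ^ χ * t ^ (6 * χ - 3)) * levelEnergy w ℓ R ^ χ := by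
        gcongr ?_ * ?_ * _
        exact levelJump_mul_cutoff_rpow_le hk ht hχ.le
    _ = _ := by ring

lemma exists_le_levelEnergy_of_lt (hw : Continuous w) {M : ℝ} (hM : M < w 0) :
    ∃ c > 0, ∀ ℓ ≤ M, ∀ r ≥ 1, c ≤ levelEnergy w ℓ r := by
  set c := (w 0 - M) / 2
  have : 0 < c := half_pos (sub_pos.2 hM)
  obtain ⟨ρ, hρ, hball⟩ := Metric.eventually_nhds_iff_ball.1
    (hw.continuousAt.eventually (lt_mem_nhds (show M + c < w 0 by grind)))
  set s := min ρ 1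
  have hs : 0 < s := lt_min hρ one_pos
  have hvol : 0 < volume.real (ball (0 : E) s) :=
    ENNReal.toReal_pos (measure_ball_pos _ _ hs).ne' measure_ball_lt_top.ne
  refine ⟨c ^ 3 * volume.real (ball (0 : E) s), by positivity, fun ℓ hℓ r hr => ?_⟩
  rw [levelEnergy, ← integral_indicator measurableSet_closedBall]
  have hz₀ : ∀ x, 0 ≤ excess ℓ w x := fun x => excess_nonneg
  refine mul_volume_ball_le_integral (x₀ := 0)
    ((integrableOn_excess_pow_add_pow hw).integrable_indicator measurableSet_closedBall)
    (indicator_nonneg fun x _ => add_nonneg (pow_nonneg (hz₀ x) 4) (pow_nonneg (hz₀ x) 3))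
    fun y hy => ?_
  rw [indicator_of_mem (ball_subset_closedBall.trans (closedBall_subset_closedBall
    ((min_le_right _ _).trans hr)) hy)]
  have hcz : c ≤ excess ℓ w y := by
    have := hball y (ball_subset_ball (min_le_left _ _) hy)
    exact le_max_of_le_left (by linarith)
  calc c ^ 3 ≤ excess ℓ w y ^ 3 := by gcongr
    _ ≤ excess ℓ w y ^ 4 + excess ℓ w y ^ 3 := le_add_of_nonneg_left (pow_nonneg (hz₀ y) 4)

theorem exists_forall_isDeGiorgi_le (hE : 1 ≤ finrank ℝ E) (hk : 0 < k) (hA : 0 ≤ A) :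
    ∃ ε > 0, ∀ w : E → ℝ, ContDiff ℝ 1 w → IsDeGiorgi A k w → levelEnergy w k 2 ≤ ε →
      w 0 ≤ 2 * k := by
  obtain ⟨χ, hχ, D, hD, hstep⟩ := exists_levelEnergy_add_le (E := E) hE hk hA
  obtain ⟨ε, hε, hconv⟩ := exists_tendsto_zero_of_le_geometric_mul_rpow hD
    (Real.one_lt_rpow one_lt_two (by linarith) : (1 : ℝ) < 2 ^ (6 * χ - 3)) (sub_pos.2 hχ)
  refine ⟨ε, hε, fun w hw hclass hsmall => ?_⟩
  let Y : ℕ → ℝ := fun j => levelEnergy w (2 * k - k / 2 ^ j) (1 + 1 / 2 ^ j)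
  have hlim : Tendsto Y atTop (𝓝 0) := by
    refine hconv Y (fun j => levelEnergy_nonneg) (fun j => ?_) ?_
    · set t : ℝ := 2 ^ j with ht_def
      have ht : 1 ≤ t := one_le_pow₀ one_le_two
      have hkt : k / t ≤ k := div_le_self hk.le ht
      have ht' : 1 / t ≤ 1 := div_le_self zero_le_one ht
      have hlevel : 2 * k - k / 2 ^ (j + 1) = 2 * k - k / t + k / (2 * t) := by
        rw [pow_succ', ← ht_def]; field_simp; ring
      have hradius : 1 + 1 / t = 1 + 1 / 2 ^ (j + 1) + 1 / (2 * t) := by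
        rw [pow_succ', ← ht_def]; field_simp; ring
      have hj := hstep w hw hclass (2 * k - k / t) (by linarith) t ht (1 + 1 / 2 ^ (j + 1))
        (by positivity) (by linarith)
      rw [add_sub_cancel, Real.rpow_pow_comm zero_le_two]
      rwa [← hlevel, ← hradius] at hj
    · norm_num [Y]
      rwa [two_mul, add_sub_cancel_right]
  by_contra! hlt
  obtain ⟨c, hc, hlow⟩ := exists_le_levelEnergy_of_lt hw.continuous hlt
  exact hc.not_ge (ge_of_tendsto' hlim fun j => hlow _ (sub_le_self _ (by positivity)) _
    (le_add_of_nonneg_right (by positivity)))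

end Iteration

section Caccioppoli

variable {E : Type*} [NormedAddCommGroup E] [InnerProductSpace ℝ E] {U : Set E} {η v : E → ℝ}
  {x : E} {p lam δ G K R : ℝ}

lemma signedPow_mul_self_le {s t : ℝ} (hs : 0 ≤ s) (ht : |t| ≤ δ) (hδ : δ ≤ 1) :
    signedPow s t * t ≤ δ :=
  calc signedPow s t * t ≤ |t| ^ (s + 1) * |t| := by
        rw [← abs_signedPow hs, ← abs_mul]
        exact le_abs_self _
    _ ≤ 1 * δ := by
        gcongr
        exact Real.rpow_le_one (abs_nonneg t) (ht.trans hδ) (by linarith)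
    _ = δ := one_mul δ

lemma norm_gradient_rpow_mul_sq_add_le [CompleteSpace E] (hv : Differentiable ℝ v)
    (hη : IsCutoff U η) (hp : 2 < p) (hlam : 1 ≤ lam) (hδ : δ ≤ 1) (hvx : |v x| ≤ δ)
    (hK : ‖∇ v x‖ ≤ K) (hG : ‖∇ η x‖ ≤ G) :
    ‖∇ v x‖ ^ p * η x ^ 2 + (signedPow (lam - 1) (v x) * (v x * η x ^ 2) -
      ⟪‖∇ v x‖ ^ (p - 2) • ∇ v x, ∇ (fun y => v y * η y ^ 2) x⟫) ≤
        (1 + 2 * K ^ (p - 1) * G) * δ := by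
  have hδ₀ : 0 ≤ δ := (abs_nonneg _).trans hvx
  have hη₀ := hη.nonneg x
  have hη₁ := hη.le_one x
  have : 0 ≤ K := (norm_nonneg _).trans hK
  have : 0 ≤ G := (norm_nonneg _).trans hG
  have hsplit : ‖∇ v x‖ ^ p = ‖∇ v x‖ ^ (p - 2) * ‖∇ v x‖ ^ 2 := by
    rw [← Real.rpow_add_natCast' (norm_nonneg (∇ v x)) (by push_cast; linarith)]
    congr 1
    push_cast
    ring
  have hsource : signedPow (lam - 1) (v x) * v x * η x ^ 2 ≤ δ * 1 := by
    gcongr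
    exacts [signedPow_mul_self_le (by linarith) hvx hδ, pow_le_one₀ hη₀ hη₁]
  have hflux : -(v x * ⟪‖∇ v x‖ ^ (p - 2) • ∇ v x, ∇ η x⟫) * η x ≤ δ * (K ^ (p - 1) * G) * 1 := by
    gcongr
    refine (neg_le_abs _).trans ?_
    rw [abs_mul]
    gcongr
    refine (abs_real_inner_le_norm _ _).trans ?_
    rw [norm_smul, Real.norm_of_nonneg (by positivity), ← Real.rpow_add_one' (norm_nonneg _)
      (by linarith), show p - 2 + 1 = p - 1 by ring]
    gcongr
    linarith
  rw [gradient_comp_mul_pow (hv x) (hasDerivAt_id' (v x)) (hη.differentiableAt x) 2,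
    inner_add_right, real_inner_smul_right _ (∇ v x), real_inner_smul_left (∇ v x),
    real_inner_self_eq_norm_sq, hsplit, real_inner_smul_right]
  push_cast
  linear_combination hsource + 2 * hflux

variable [FiniteDimensional ℝ E] [MeasurableSpace E] [BorelSpace E]

lemma IsWeakSolution.integral_norm_gradient_rpow_mul_sq_le (hW : IsWeakSolution p lam v U)
    (hv : ContDiff ℝ 1 v) (hU : IsOpen U) (hRU : closedBall 0 R ⊆ U)
    (hη : IsCutoff (closedBall 0 R) η) (hp : 2 < p) (hlam : 1 ≤ lam) (hδ : δ ≤ 1)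
    (hvδ : ∀ x ∈ U, |v x| ≤ δ) (hK : ∀ x ∈ U, ‖∇ v x‖ ≤ K) (hG : ∀ x, ‖∇ η x‖ ≤ G) :
    ∫ x, ‖∇ v x‖ ^ p * η x ^ 2 ≤
      (1 + 2 * K ^ (p - 1) * G) * δ * volume.real (closedBall (0 : E) R) := by
  have hφ : IsTestFunction (closedBall 0 R) fun x => v x * η x ^ 2 :=
    (hη.toIsTestFunction.pow two_ne_zero).mul_left hv
  have hsource : Integrable fun x => signedPow (lam - 1) (v x) * (v x * η x ^ 2) :=
    hφ.integrable_mul ((continuous_signedPow (sub_nonneg.2 hlam)).comp hv.continuous)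
  have hflux := hφ.integrable_inner_gradient (continuous_norm_rpow_smul_gradient hv hp.le)
  have hmain : Integrable fun x => ‖∇ v x‖ ^ p * η x ^ 2 :=
    (hη.toIsTestFunction.pow two_ne_zero).integrable_mul
      ((continuous_gradient hv).norm.rpow_const fun _ => Or.inr (by linarith))
  have hzero := integral_sub hsource hflux
  rw [hW.integral_eq hv hU hp.le hlam (hφ.mono hRU), sub_self] at hzero
  have hadd := integral_add hmain (hsource.sub hflux)
  simp only [Pi.sub_apply] at hadd
  rw [hzero, add_zero] at hadd
  rw [← hadd, ← setIntegral_eq_integral_of_forall_compl_eq_zero (s := closedBall 0 R)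
    fun x hx => ?_]
  · refine (setIntegral_mono_on (hmain.add (hsource.sub hflux)).integrableOn
      (integrableOn_const measure_closedBall_lt_top.ne) measurableSet_closedBall fun x hx =>
      norm_gradient_rpow_mul_sq_add_le (hv.differentiable one_ne_zero) hη hp hlam hδ
        (hvδ x (hRU hx)) (hK x (hRU hx)) (hG x)).trans_eq ?_
    rw [setIntegral_const, smul_eq_mul, mul_comm]
  · have hx' := fun h => hx (hφ.tsupport_subset h)
    have hηx := image_eq_zero_of_notMem_tsupport fun h => hx (hη.tsupport_subset h)
    rw [gradient_eq_zero_of_notMem_tsupport hx', hηx, inner_zero_right]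
    ring

lemma exists_integral_norm_gradient_rpow_le (hp : 2 < p) (hlam : 1 ≤ lam) (hK : 0 < K) :
    ∃ C > 0, ∀ δ ≤ 1, ∀ v : E → ℝ, ContDiff ℝ 1 v → IsWeakSolution p lam v (ball 0 4) →
      (∀ x ∈ ball (0 : E) 4, |v x| ≤ δ) → (∀ x ∈ ball (0 : E) 4, ‖∇ v x‖ ≤ K) →
        ∫ x in closedBall (0 : E) 2, ‖∇ v x‖ ^ p ≤ C * δ := by
  obtain ⟨L, hL, hcutoff⟩ := exists_isCutoff (E := E)
  obtain ⟨η, hη, hη₁, hG⟩ := hcutoff 2 3 zero_le_two (by norm_num)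
  have hvol : 0 < volume.real (closedBall (0 : E) 3) :=
    ENNReal.toReal_pos (measure_closedBall_pos _ _ three_pos).ne' measure_closedBall_lt_top.ne
  refine ⟨(1 + 2 * K ^ (p - 1) * (L / (3 - 2))) * volume.real (closedBall (0 : E) 3),
    by norm_num; positivity, fun δ hδ v hv hW hvδ hvK => ?_⟩
  have hint : Integrable fun x => ‖∇ v x‖ ^ p * η x ^ 2 :=
    (hη.toIsTestFunction.pow two_ne_zero).integrable_mul
      ((continuous_gradient hv).norm.rpow_const fun _ => Or.inr (by linarith))
  calc ∫ x in closedBall (0 : E) 2, ‖∇ v x‖ ^ p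
      = ∫ x in closedBall (0 : E) 2, ‖∇ v x‖ ^ p * η x ^ 2 :=
        setIntegral_congr_fun measurableSet_closedBall fun x hx => by
          simp only [hη₁ x hx, one_pow, mul_one]
    _ ≤ ∫ x, ‖∇ v x‖ ^ p * η x ^ 2 :=
        setIntegral_le_integral hint (Eventually.of_forall fun x => by
          simp only [Pi.zero_apply]
          positivity)
    _ ≤ _ := hW.integral_norm_gradient_rpow_mul_sq_le hv isOpen_ball
        (closedBall_subset_ball (by norm_num)) hη hp hlam hδ hvδ hvK hG
    _ = _ := by ring

end Caccioppoli

section Rescaling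

variable {E : Type*} [NormedAddCommGroup E] [InnerProductSpace ℝ E] {U V : Set E} {w φ : E → ℝ}
  {x y : E} {a p lam s : ℝ}

/-- The rescaling `x ↦ s^a w(y + s x)`, which preserves the equation when `a = p / (λ + 1 - p)`. -/
noncomputable def rescale (a s : ℝ) (y : E) (w : E → ℝ) (x : E) : ℝ := s ^ a * w (y + s • x)

lemma contDiff_rescale (hw : ContDiff ℝ 1 w) : ContDiff ℝ 1 (rescale a s y w) := by
  unfold rescale
  fun_prop

lemma exists_eq_comp_add_smul (hs : s ≠ 0) (hVU : ∀ x ∈ V, y + s • x ∈ U) {n : WithTop ℕ∞}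
    (hφ : ContDiff ℝ n φ) (hc : HasCompactSupport φ) (hφV : tsupport φ ⊆ V) :
    ∃ ψ : E → ℝ, ContDiff ℝ n ψ ∧ HasCompactSupport ψ ∧ tsupport ψ ⊆ U ∧
      φ = fun x => ψ (y + s • x) := by
  let e : E ≃ₜ E := (Homeomorph.subRight y).trans (Homeomorph.smulOfNeZero s⁻¹ (inv_ne_zero hs))
  have he : ∀ z, y + s • e z = z := fun z => by
    change y + s • s⁻¹ • (z - y) = z
    rw [smul_inv_smul₀ hs, add_sub_cancel]
  refine ⟨φ ∘ e, hφ.comp ((contDiff_id.sub contDiff_const).const_smul s⁻¹),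
    hc.comp_homeomorph e, fun z hz => ?_, funext fun x => ?_⟩
  · rw [tsupport_comp_eq_preimage] at hz
    exact he z ▸ hVU _ (hφV hz)
  · change φ x = φ (s⁻¹ • (y + s • x - y))
    rw [add_sub_cancel_left, inv_smul_smul₀ hs]

lemma signedPow_rescale_mul (hs : 0 < s) :
    signedPow (lam - 1) (rescale a s y w x) * φ (y + s • x) =
      s ^ (a * lam) * (signedPow (lam - 1) (w (y + s • x)) * φ (y + s • x)) := by
  have hpow : s ^ (a * lam) = (s ^ a) ^ (lam - 1) * s ^ a := by
    rw [← Real.rpow_mul hs.le, ← Real.rpow_add hs]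
    ring_nf
  rw [signedPow, signedPow, rescale, abs_mul, abs_of_pos (by positivity : 0 < s ^ a),
    Real.mul_rpow (by positivity) (abs_nonneg _), hpow]
  ring

section Gradient

variable [CompleteSpace E]

lemma gradient_comp_add_smul (hφ : Differentiable ℝ φ) :
    ∇ (fun z => φ (y + s • z)) x = s • ∇ φ (y + s • x) := by
  simpa only [one_mul] using gradient_const_mul_comp_add_smul hφ 1 s y x

lemma gradient_rescale (hs : 0 < s) (hw : Differentiable ℝ w) :
    ∇ (rescale a s y w) x = s ^ (a + 1) • ∇ w (y + s • x) := by
  rw [Real.rpow_add_one hs.ne']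
  exact gradient_const_mul_comp_add_smul hw (s ^ a) s y x

lemma norm_gradient_rescale_rpow (hs : 0 < s) (hw : Differentiable ℝ w) (q : ℝ) :
    ‖∇ (rescale a s y w) x‖ ^ q = s ^ ((a + 1) * q) * ‖∇ w (y + s • x)‖ ^ q := by
  rw [gradient_rescale hs hw, norm_smul, Real.norm_of_nonneg (by positivity),
    Real.mul_rpow (by positivity) (norm_nonneg _), ← Real.rpow_mul hs.le]

lemma inner_flux_rescale (ha : a * (lam + 1 - p) = p) (hs : 0 < s) (hw : Differentiable ℝ w)
    (hφ : Differentiable ℝ φ) :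
    ⟪‖∇ (rescale a s y w) x‖ ^ (p - 2) • ∇ (rescale a s y w) x, ∇ (fun z => φ (y + s • z)) x⟫ =
      s ^ (a * lam) * ⟪‖∇ w (y + s • x)‖ ^ (p - 2) • ∇ w (y + s • x), ∇ φ (y + s • x)⟫ := by
  have hpow : s ^ (a * lam) = s ^ ((a + 1) * (p - 2)) * s ^ (a + 1) * s := by
    rw [← Real.rpow_add hs, ← Real.rpow_add_one hs.ne']
    congr 1
    linear_combination ha
  rw [norm_gradient_rescale_rpow hs hw, gradient_rescale hs hw, gradient_comp_add_smul hφ,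
    smul_smul, real_inner_smul_left, real_inner_smul_right, real_inner_smul_left, hpow]
  ring

lemma stabilityDensity_rescale (ha : a * (lam + 1 - p) = p) (hs : 0 < s) (hw : Differentiable ℝ w)
    (hφ : Differentiable ℝ φ) :
    stabilityDensity p lam (rescale a s y w) (fun z => φ (y + s • z)) x =
      s ^ (a * (lam - 1)) * stabilityDensity p lam w φ (y + s • x) := by
  have hpow₁ : s ^ (a * (lam - 1)) = s ^ ((a + 1) * (p - 2)) * s ^ 2 := by
    rw [← Real.rpow_add_natCast hs.ne']
    congr 1
    push_cast
    linear_combination ha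
  have hpow₂ : s ^ (a * (lam - 1)) = s ^ ((a + 1) * (p - 4)) * s ^ ((a + 1) * 2) * s ^ 2 := by
    rw [← Real.rpow_add hs, ← Real.rpow_add_natCast hs.ne']
    congr 1
    push_cast
    linear_combination ha
  have hsq : (s ^ (a + 1)) ^ 2 = s ^ ((a + 1) * 2) := by
    rw [Real.rpow_mul hs.le, Real.rpow_two]
  have hzeroth : |rescale a s y w x| ^ (lam - 1) =
      s ^ (a * (lam - 1)) * |w (y + s • x)| ^ (lam - 1) := by
    rw [rescale, abs_mul, abs_of_pos (by positivity : 0 < s ^ a),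
      Real.mul_rpow (by positivity) (abs_nonneg _), ← Real.rpow_mul hs.le]
  rw [stabilityDensity, norm_gradient_rescale_rpow hs hw, norm_gradient_rescale_rpow hs hw,
    gradient_rescale hs hw, gradient_comp_add_smul hφ, norm_smul, Real.norm_of_nonneg hs.le,
    real_inner_smul_left, real_inner_smul_right, hzeroth, stabilityDensity, mul_pow, mul_pow,
    mul_pow, hsq]
  linear_combination -(‖∇ w (y + s • x)‖ ^ (p - 2) * ‖∇ φ (y + s • x)‖ ^ 2) * hpow₁ -
    ((p - 2) * ‖∇ w (y + s • x)‖ ^ (p - 4) * ⟪∇ w (y + s • x), ∇ φ (y + s • x)⟫ ^ 2) * hpow₂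

end Gradient

variable [FiniteDimensional ℝ E] [MeasurableSpace E] [BorelSpace E]

lemma exists_integral_comp_add_smul_eq (hs : s ≠ 0) (y : E) :
    ∃ c > 0, ∀ F : E → ℝ, ∫ x, F (y + s • x) = c * ∫ x, F x := by
  refine ⟨|(s ^ finrank ℝ E)⁻¹|, by positivity, fun F => ?_⟩
  rw [Measure.integral_comp_smul volume (fun x => F (y + x)) s, integral_add_left_eq_self,
    smul_eq_mul]

lemma IsWeakSolution.rescale (hW : IsWeakSolution p lam w U) (ha : a * (lam + 1 - p) = p)
    (hs : 0 < s) (hw : Differentiable ℝ w) (hVU : ∀ x ∈ V, y + s • x ∈ U) :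
    IsWeakSolution p lam (rescale a s y w) V := by
  refine isWeakSolution_iff.2 fun φ hφ hc hφV => ?_
  obtain ⟨ψ, hψ, hψc, hψU, rfl⟩ := exists_eq_comp_add_smul hs.ne' hVU hφ hc hφV
  obtain ⟨c, -, hc⟩ := exists_integral_comp_add_smul_eq hs.ne' y
  simp only [inner_flux_rescale ha hs hw (hψ.differentiable (by simp)), signedPow_rescale_mul hs]
  rw [integral_const_mul, integral_const_mul, hc fun x => ⟪‖∇ w x‖ ^ (p - 2) • ∇ w x, ∇ ψ x⟫,
    hc fun x => signedPow (lam - 1) (w x) * ψ x, isWeakSolution_iff.1 hW ψ hψ hψc hψU]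

lemma IsStable.rescale (hS : IsStable p lam w U) (ha : a * (lam + 1 - p) = p) (hs : 0 < s)
    (hw : Differentiable ℝ w) (hVU : ∀ x ∈ V, y + s • x ∈ U) :
    IsStable p lam (rescale a s y w) V := by
  refine isStable_iff.2 fun φ hφ => ?_
  obtain ⟨ψ, hψ, hψc, hψU, rfl⟩ := exists_eq_comp_add_smul hs.ne' hVU hφ.contDiff
    hφ.hasCompactSupport hφ.tsupport_subset
  obtain ⟨c, hc₀, hc⟩ := exists_integral_comp_add_smul_eq hs.ne' y
  simp only [stabilityDensity_rescale ha hs hw (hψ.differentiable one_ne_zero)]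
  rw [integral_const_mul, hc]
  have := isStable_iff.1 hS ψ ⟨hψ, hψc, hψU⟩
  positivity

lemma IsStableSolution.rescale (hw : IsStableSolution p lam w U) (ha : a * (lam + 1 - p) = p)
    (hs : 0 < s) (hVU : ∀ x ∈ V, y + s • x ∈ U) :
    IsStableSolution p lam (rescale a s y w) V :=
  have hdiff := hw.contDiff.differentiable one_ne_zero
  ⟨contDiff_rescale hw.contDiff, hw.isWeakSolution.rescale ha hs hdiff hVU,
    hw.isStable.rescale ha hs hdiff hVU⟩

end Rescaling

section Energy

variable {E : Type*} [NormedAddCommGroup E] [InnerProductSpace ℝ E]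

lemma two_mul_le_inner_add {c L z t : ℝ} {W D B : E} (hc : 0 < c) (hz : 0 ≤ z) (ht : 0 ≤ t)
    (hmono : 0 < z → c * ‖D‖ ^ 2 ≤ ⟪W, D⟫) (hlip : ‖W‖ ≤ L * ‖D‖) :
    2 * c * (z ^ 2 * ‖D‖ ^ 2 * t ^ 2) ≤
      ⟪W, (3 * z ^ 2 * t ^ 2) • D + (z ^ 3 * (2 * t)) • B⟫ + L ^ 2 / c * (z ^ 4 * ‖B‖ ^ 2) := by
  rw [inner_add_right, real_inner_smul_right, real_inner_smul_right]
  have hdiag : 3 * z ^ 2 * t ^ 2 * (c * ‖D‖ ^ 2) ≤ 3 * z ^ 2 * t ^ 2 * ⟪W, D⟫ := by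
    rcases hz.eq_or_lt with rfl | hz
    · simp
    · gcongr
      exact hmono hz
  have hcross : z ^ 3 * (2 * t) * -(L * ‖D‖ * ‖B‖) ≤ z ^ 3 * (2 * t) * ⟪W, B⟫ := by
    gcongr
    refine neg_le_of_abs_le ((abs_real_inner_le_norm W B).trans ?_)
    gcongr
  have hyoung : 2 * (z ^ 3 * t * (L * ‖D‖ * ‖B‖)) ≤
      c * (z ^ 2 * ‖D‖ ^ 2 * t ^ 2) + L ^ 2 / c * (z ^ 4 * ‖B‖ ^ 2) := by
    have hsq : 0 ≤ z ^ 2 / c * (c * ‖D‖ * t - L * z * ‖B‖) ^ 2 := by positivity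
    refine sub_nonneg.1 (hsq.trans_eq ?_)
    field_simp
    ring
  linear_combination hdiag + hcross + hyoung

lemma two_mul_excess_le_inner_gradient_add [CompleteSpace E] {U : Set E} {W : E → E} {η w : E → ℝ}
    {c k ℓ L : ℝ} (hw : Differentiable ℝ w) (hη : IsCutoff U η) (hc : 0 < c) (hkℓ : k ≤ ℓ)
    (hmono : ∀ x ∈ U, k < w x → c * ‖∇ w x‖ ^ 2 ≤ ⟪W x, ∇ w x⟫)
    (hlip : ∀ x ∈ U, ‖W x‖ ≤ L * ‖∇ w x‖) (x : E) :
    2 * c * (excess ℓ w x ^ 2 * ‖∇ w x‖ ^ 2 * η x ^ 2) ≤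
      ⟪W x, ∇ (fun y => excess ℓ w y ^ 3 * η y ^ 2) x⟫ +
        L ^ 2 / c * (excess ℓ w x ^ 4 * ‖∇ η x‖ ^ 2) := by
  rw [gradient_excess_pow_mul_pow (hw x) (hη.differentiableAt x) two_ne_zero]
  by_cases hx : x ∈ tsupport η
  · have hxU := hη.tsupport_subset hx
    refine (two_mul_le_inner_add (B := ∇ η x) hc excess_nonneg (hη.nonneg x) (fun hz => ?_)
      (hlip x hxU)).trans_eq (by norm_num)
    have hpos : 0 < w x - ℓ := (lt_max_iff.1 hz).resolve_right (lt_irrefl 0)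
    exact hmono x hxU (by linarith)
  · simp [image_eq_zero_of_notMem_tsupport hx, gradient_eq_zero_of_notMem_tsupport hx]

variable [FiniteDimensional ℝ E] [MeasurableSpace E] [BorelSpace E]

theorem isDeGiorgi_of_integral_eq {W : E → E} {g w : E → ℝ} {c k L τ : ℝ} (hw : ContDiff ℝ 1 w)
    (hW : Continuous W) (hg : Continuous g) (hc : 0 < c) (hτ : 0 ≤ τ)
    (heq : ∀ φ, IsTestFunction (closedBall 0 2) φ → ∫ x, ⟪W x, ∇ φ x⟫ = ∫ x, g x * φ x)
    (hmono : ∀ x ∈ closedBall (0 : E) 2, k < w x → c * ‖∇ w x‖ ^ 2 ≤ ⟪W x, ∇ w x⟫)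
    (hlip : ∀ x ∈ closedBall (0 : E) 2, ‖W x‖ ≤ L * ‖∇ w x‖)
    (hgτ : ∀ x ∈ closedBall (0 : E) 2, g x ≤ τ) :
    IsDeGiorgi ((L ^ 2 / c + τ) / (2 * c)) k w := by
  intro ℓ hℓ η hη
  have hη₂ := hη.toIsTestFunction.pow two_ne_zero
  have hz₀ : ∀ x, 0 ≤ excess ℓ w x := fun x => excess_nonneg
  have hz := continuous_excess hw.continuous ℓ
  have hφ : IsTestFunction (closedBall 0 2) fun x => excess ℓ w x ^ 3 * η x ^ 2 :=
    hη₂.mul_left (contDiff_excess_pow hw ℓ two_ne_zero)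
  have henergy : Integrable fun x => excess ℓ w x ^ 2 * ‖∇ w x‖ ^ 2 * η x ^ 2 :=
    hη₂.integrable_mul ((hz.pow 2).mul ((continuous_gradient hw).norm.pow 2))
  have hcut : Integrable fun x => excess ℓ w x ^ 4 * ‖∇ η x‖ ^ 2 :=
    integrable_of_eq_zero_off_tsupport
      ((hz.pow 4).mul ((continuous_gradient hη.contDiff).norm.pow 2)) hη.hasCompactSupport
      fun x hx => by simp [gradient_eq_zero_of_notMem_tsupport hx]
  have hcube : Integrable fun x => excess ℓ w x ^ 3 * η x ^ 2 := hη₂.integrable_mul (hz.pow 3)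
  have hflux := hφ.integrable_inner_gradient hW
  have hdiag : 2 * c * ∫ x, excess ℓ w x ^ 2 * ‖∇ w x‖ ^ 2 * η x ^ 2 ≤
      (∫ x, ⟪W x, ∇ (fun x => excess ℓ w x ^ 3 * η x ^ 2) x⟫) +
        L ^ 2 / c * ∫ x, excess ℓ w x ^ 4 * ‖∇ η x‖ ^ 2 := by
    rw [← integral_const_mul, ← integral_const_mul, ← integral_add hflux (hcut.const_mul _)]
    exact integral_mono (henergy.const_mul _) (hflux.add (hcut.const_mul _))
      (two_mul_excess_le_inner_gradient_add (hw.differentiable one_ne_zero) hη hc hℓ hmono hlip)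
  have hsource : ∫ x, g x * (excess ℓ w x ^ 3 * η x ^ 2) ≤
      τ * ∫ x, excess ℓ w x ^ 3 * η x ^ 2 := by
    rw [← integral_const_mul]
    refine integral_mono (hφ.integrable_mul hg) (hcube.const_mul _) fun x => ?_
    by_cases hx : x ∈ closedBall 0 2
    · have := hz₀ x
      exact mul_le_mul_of_nonneg_right (hgτ x hx) (by positivity)
    · simp [image_eq_zero_of_notMem_tsupport fun h => hx (hη.tsupport_subset h)]
  rw [heq _ hφ] at hdiag
  rw [integral_add hcut hcube, div_mul_eq_mul_div, le_div_iff₀ (by positivity)]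
  have hcut₀ : 0 ≤ ∫ x, excess ℓ w x ^ 4 * ‖∇ η x‖ ^ 2 := integral_nonneg fun x => by positivity
  have hcube₀ : 0 ≤ ∫ x, excess ℓ w x ^ 3 * η x ^ 2 := integral_nonneg fun x => by
    have := hz₀ x
    simp only [Pi.zero_apply]
    positivity
  have : 0 ≤ L ^ 2 / c := by positivity
  linear_combination hdiag + hsource + τ * hcut₀ + L ^ 2 / c * hcube₀

end Energy

section DifferenceQuotient

variable {E : Type*} [NormedAddCommGroup E] {v : E → ℝ} {x y : E}

/-- The difference quotient of `v` along `y`; it is `0` when `y = 0`. -/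
noncomputable def diffQuotient (y : E) (v : E → ℝ) (x : E) : ℝ := ‖y‖⁻¹ * (v (y + x) - v x)

variable [InnerProductSpace ℝ E]

lemma contDiff_diffQuotient (hv : ContDiff ℝ 1 v) : ContDiff ℝ 1 (diffQuotient y v) := by
  unfold diffQuotient
  fun_prop

lemma abs_diffQuotient_le {U : Set E} {K : ℝ} [CompleteSpace E] (hv : Differentiable ℝ v)
    (hU : Convex ℝ U) (hK : ∀ x ∈ U, ‖∇ v x‖ ≤ K) (hx : x ∈ U) (hyx : y + x ∈ U) :
    |diffQuotient y v x| ≤ K := by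
  have hK₀ : 0 ≤ K := (norm_nonneg _).trans (hK x hx)
  have hlip := hU.norm_image_sub_le_of_norm_fderiv_le (𝕜 := ℝ) (fun z _ => hv z)
    (fun z hz => (norm_gradient v z).symm.trans_le (hK z hz)) hx hyx
  rw [add_sub_cancel_right, Real.norm_eq_abs] at hlip
  rw [diffQuotient, abs_mul, abs_of_nonneg (by positivity)]
  calc ‖y‖⁻¹ * |v (y + x) - v x| ≤ ‖y‖⁻¹ * (K * ‖y‖) := by gcongr
    _ = K * (‖y‖⁻¹ * ‖y‖) := by ring
    _ ≤ K := mul_le_of_le_one_right hK₀ inv_mul_le_one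

variable [CompleteSpace E] {p : ℝ}

lemma gradient_diffQuotient (hv : Differentiable ℝ v) :
    ∇ (diffQuotient y v) x = ‖y‖⁻¹ • (∇ v (y + x) - ∇ v x) := by
  have hfun : diffQuotient y v = fun x => ‖y‖⁻¹ * v (y + x) - ‖y‖⁻¹ * v x :=
    funext fun x => mul_sub _ _ _
  have hshift := gradient_const_mul_comp_add_smul hv ‖y‖⁻¹ 1 y x
  have hself := gradient_const_mul_comp_add_smul hv ‖y‖⁻¹ 1 0 x
  simp only [one_smul, zero_add, mul_one] at hshift hself
  rw [hfun, gradient_fun_sub (by fun_prop) (by fun_prop), hshift, hself, smul_sub]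

/-- The difference quotient along `y` of the flux `‖∇ v‖^(p - 2) ∇ v`. -/
noncomputable def fluxQuotient (p : ℝ) (y : E) (v : E → ℝ) (x : E) : E :=
  ‖y‖⁻¹ • (‖∇ v (y + x)‖ ^ (p - 2) • ∇ v (y + x) - ‖∇ v x‖ ^ (p - 2) • ∇ v x)

lemma continuous_fluxQuotient (hv : ContDiff ℝ 1 v) (hp : 2 ≤ p) :
    Continuous (fluxQuotient p y v) := by
  have hflux := continuous_norm_rpow_smul_gradient hv hp
  exact ((hflux.comp (continuous_const_add y)).sub hflux).const_smul _

lemma half_norm_rpow_mul_sq_le_inner_fluxQuotient (hv : Differentiable ℝ v) (hp : 2 ≤ p) :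
    1 / 2 * ‖∇ v x‖ ^ (p - 2) * ‖∇ (diffQuotient y v) x‖ ^ 2 ≤
      ⟪fluxQuotient p y v x, ∇ (diffQuotient y v) x⟫ := by
  have hmono := half_norm_rpow_mul_sq_le_inner (sub_nonneg.2 hp) (∇ v (y + x)) (∇ v x)
  rw [gradient_diffQuotient hv, fluxQuotient, norm_smul, norm_inv, norm_norm,
    real_inner_smul_left, real_inner_smul_right]
  linear_combination ‖y‖⁻¹ ^ 2 * hmono

lemma norm_fluxQuotient_le {K : ℝ} (hv : Differentiable ℝ v) (hp : 2 ≤ p)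
    (hyx : ‖∇ v (y + x)‖ ≤ K) (hx : ‖∇ v x‖ ≤ K) :
    ‖fluxQuotient p y v x‖ ≤ p * K ^ (p - 2) * ‖∇ (diffQuotient y v) x‖ := by
  have hlip := norm_norm_rpow_smul_sub_le (sub_nonneg.2 hp) hyx hx
  rw [gradient_diffQuotient hv, fluxQuotient, norm_smul, norm_smul, norm_inv, norm_norm]
  linear_combination ‖y‖⁻¹ * hlip

end DifferenceQuotient

section DifferenceQuotientEquation

variable {E : Type*} [NormedAddCommGroup E] [InnerProductSpace ℝ E] [FiniteDimensional ℝ E]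
  [MeasurableSpace E] [BorelSpace E] {U : Set E} {v φ : E → ℝ} {x y : E} {p lam k K : ℝ}

lemma IsWeakSolution.comp_const_add (hW : IsWeakSolution p lam v U) (hv : Differentiable ℝ v)
    (hlam : p - 1 < lam) (y : E) :
    IsWeakSolution p lam (fun x => v (y + x)) ((y + ·) ⁻¹' U) := by
  have ha : p / (lam + 1 - p) * (lam + 1 - p) = p := div_mul_cancel₀ p (by linarith)
  convert hW.rescale ha one_pos hv (y := y) (V := (y + ·) ⁻¹' U) fun x hx => ?_ using 1
  · funext x
    rw [PLaplace.rescale, Real.one_rpow, one_mul, one_smul]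
  · rwa [one_smul]

lemma IsWeakSolution.integral_fluxQuotient_eq (hW : IsWeakSolution p lam v U)
    (hv : ContDiff ℝ 1 v) (hU : IsOpen U) (hp : 2 ≤ p) (hlam : p - 1 < lam)
    (hφ : IsTestFunction U φ) (hφy : IsTestFunction ((y + ·) ⁻¹' U) φ) :
    ∫ x, ⟪fluxQuotient p y v x, ∇ φ x⟫ =
      ∫ x, ‖y‖⁻¹ * (signedPow (lam - 1) (v (y + x)) - signedPow (lam - 1) (v x)) * φ x := by
  have hvdiff := hv.differentiable one_ne_zero
  have hvy : ContDiff ℝ 1 fun x => v (y + x) := hv.comp (contDiff_const.add contDiff_id)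
  have hgrad : ∀ x, ∇ (fun z => v (y + z)) x = ∇ v (y + x) := fun x => by
    simpa only [one_smul] using gradient_comp_add_smul (s := 1) (y := y) (x := x) hvdiff
  have hsource := (continuous_signedPow (s := lam - 1) (by linarith)).comp hv.continuous
  have hsourcey := hsource.comp (continuous_const_add y)
  have hflux := continuous_norm_rpow_smul_gradient hv hp
  have hfluxy := hflux.comp (continuous_const_add y)
  have heq := hW.integral_eq hv hU hp (by linarith) hφ
  have heqy := (hW.comp_const_add hvdiff hlam y).integral_eq hvy
    (hU.preimage (continuous_const_add y)) hp (by linarith) hφy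
  simp only [hgrad] at heqy
  have hleft := integral_sub (hφ.integrable_inner_gradient hfluxy)
    (hφ.integrable_inner_gradient hflux)
  have hright := integral_sub (hφ.integrable_mul hsourcey) (hφ.integrable_mul hsource)
  simp only [Function.comp_apply] at hleft hright
  rw [heq, heqy, ← hright] at hleft
  simp only [fluxQuotient, real_inner_smul_left, inner_sub_left, mul_assoc, sub_mul] at hleft ⊢
  rw [integral_const_mul, integral_const_mul, hleft]

theorem exists_isDeGiorgi_diffQuotient (hp : 2 < p) (hlam : p - 1 < lam) (hK : 0 ≤ K)
    (hk : 0 < k) : ∃ A ≥ 0, ∀ v : E → ℝ, ContDiff ℝ 1 v → IsWeakSolution p lam v (ball 0 4) →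
      (∀ x ∈ ball (0 : E) 4, |v x| ≤ 1) → (∀ x ∈ ball (0 : E) 4, ‖∇ v x‖ ≤ K) →
      ∀ y, ‖y‖ ≤ 1 → (∀ x ∈ closedBall (0 : E) 2, diffQuotient y v x ≤ ‖∇ v x‖ + k / 2) →
        IsDeGiorgi A k (diffQuotient y v) := by
  set c := 1 / 2 * (k / 2) ^ (p - 2)
  refine ⟨((p * K ^ (p - 2)) ^ 2 / c + lam * K) / (2 * c), ?_, fun v hv hW hv₁ hvK y hy hle => ?_⟩
  · have : 0 < lam := by linarith
    positivity
  have hmem : ∀ x ∈ closedBall (0 : E) 2, x ∈ ball (0 : E) 4 ∧ y + x ∈ ball (0 : E) 4 := by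
    intro x hx
    rw [mem_closedBall_zero_iff] at hx
    rw [mem_ball_zero_iff, mem_ball_zero_iff]
    constructor <;> linarith [norm_add_le y x]
  have hvdiff := hv.differentiable one_ne_zero
  have hsource := (continuous_signedPow (s := lam - 1) (by linarith)).comp hv.continuous
  refine isDeGiorgi_of_integral_eq
    (g := fun x => ‖y‖⁻¹ * (signedPow (lam - 1) (v (y + x)) - signedPow (lam - 1) (v x)))
    (contDiff_diffQuotient hv) (continuous_fluxQuotient hv hp.le)
    (continuous_const.mul ((hsource.comp (continuous_const_add y)).sub hsource)) (by positivity)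
    (by have : 0 < lam := by linarith
        positivity) (fun φ hφ => hW.integral_fluxQuotient_eq hv isOpen_ball hp.le hlam
      (hφ.mono fun x hx => (hmem x hx).1) (hφ.mono fun x hx => (hmem x hx).2))
    (fun x hx hkx => ?_)
    (fun x hx => norm_fluxQuotient_le hvdiff hp.le (hvK _ (hmem x hx).2) (hvK _ (hmem x hx).1))
    (fun x hx => ?_)
  · refine le_trans ?_ (half_norm_rpow_mul_sq_le_inner_fluxQuotient hvdiff hp.le)
    have hpow : (k / 2) ^ (p - 2) ≤ ‖∇ v x‖ ^ (p - 2) :=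
      Real.rpow_le_rpow (by positivity) (by linarith [hle x hx]) (by linarith)
    exact mul_le_mul_of_nonneg_right (mul_le_mul_of_nonneg_left hpow (by norm_num)) (sq_nonneg _)
  · have hdiff := abs_diffQuotient_le hvdiff (convex_ball 0 4) hvK (hmem x hx).1 (hmem x hx).2
    have hlip := abs_signedPow_sub_le (s := lam - 1) (by linarith) (hv₁ _ (hmem x hx).2)
      (hv₁ _ (hmem x hx).1)
    rw [diffQuotient, abs_mul, abs_of_nonneg (by positivity)] at hdiff
    rw [Real.one_rpow, mul_one, sub_add_cancel] at hlip
    have : 0 < lam := by linarith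
    calc ‖y‖⁻¹ * (signedPow (lam - 1) (v (y + x)) - signedPow (lam - 1) (v x))
        ≤ ‖y‖⁻¹ * (lam * |v (y + x) - v x|) := by
          gcongr
          exact (le_abs_self _).trans hlip
      _ = lam * (‖y‖⁻¹ * |v (y + x) - v x|) := by ring
      _ ≤ lam * K := by gcongr

end DifferenceQuotientEquation

section GradientSmallness

variable {E : Type*}

lemma excess_pow_add_pow_le {w : E → ℝ} {x : E} {g k K p : ℝ} (hp : 0 ≤ p) (hk : 0 < k)
    (hg : 0 ≤ g) (hgK : g ≤ K) (hw : w x ≤ g + k / 2) :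
    excess k w x ^ 4 + excess k w x ^ 3 ≤ (K ^ 4 + K ^ 3) / (k / 2) ^ p * g ^ p := by
  have : 0 ≤ K := hg.trans hgK
  rcases le_or_gt (w x - k) 0 with hle | hgt
  · rw [excess, max_eq_right hle]
    simp only [ne_eq, OfNat.ofNat_ne_zero, not_false_eq_true, zero_pow, add_zero]
    positivity
  · have hpow : (k / 2) ^ p ≤ g ^ p := Real.rpow_le_rpow (by positivity) (by linarith) hp
    rw [excess, max_eq_left hgt.le, div_mul_eq_mul_div, le_div_iff₀ (by positivity)]
    gcongr <;> linarith

variable [NormedAddCommGroup E] [InnerProductSpace ℝ E] [FiniteDimensional ℝ E] {v : E → ℝ}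
  {S : Set E}

lemma exists_forall_abs_sub_sub_inner_gradient_le {κ : ℝ} (hv : ContDiff ℝ 1 v)
    (hS : IsCompact S) (hκ : 0 < κ) :
    ∃ h > 0, ∀ x ∈ S, ∀ y, ‖y‖ ≤ h → |v (y + x) - v x - ⟪∇ v x, y⟫| ≤ κ * ‖y‖ := by
  have huc : UniformContinuousOn (fderiv ℝ v) (cthickening 1 S) :=
    (hS.cthickening (r := 1)).uniformContinuousOn_of_continuous
      (hv.continuous_fderiv one_ne_zero).continuousOn
  obtain ⟨ρ, hρ, hclose⟩ := Metric.uniformContinuousOn_iff.1 huc κ hκ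
  refine ⟨min (ρ / 2) 1, by positivity, fun x hx y hy => ?_⟩
  obtain ⟨hyρ, hy₁⟩ := le_min_iff.1 hy
  have hderiv : ∀ z ∈ closedBall x ‖y‖, ‖fderiv ℝ v z - fderiv ℝ v x‖ ≤ κ := fun z hz => by
    rw [← dist_eq_norm]
    exact (hclose z (mem_cthickening_of_dist_le z x 1 S hx ((mem_closedBall.1 hz).trans hy₁)) x
      (self_subset_cthickening S hx) (by linarith [mem_closedBall.1 hz])).le
  have hmean := (convex_closedBall x ‖y‖).norm_image_sub_le_of_norm_fderiv_le' (𝕜 := ℝ)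
    (fun z _ => hv.differentiable one_ne_zero z) hderiv (x := x) (y := y + x)
    (by simp) (by simp)
  rwa [add_sub_cancel_right, Real.norm_eq_abs, ← inner_gradient_left] at hmean

lemma exists_diffQuotient_le_norm_gradient_add {x₀ : E} {κ : ℝ} (hv : ContDiff ℝ 1 v)
    (hS : IsCompact S) (hx₀ : x₀ ∈ S) (hκ : 0 < κ) :
    ∃ y, ‖y‖ ≤ 1 ∧ (∀ x ∈ S, diffQuotient y v x ≤ ‖∇ v x‖ + κ) ∧
      ‖∇ v x₀‖ ≤ diffQuotient y v x₀ + κ := by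
  rcases eq_or_ne (∇ v x₀) 0 with h₀ | h₀
  · refine ⟨0, by simp, fun x _ => ?_, ?_⟩ <;> simp only [diffQuotient, h₀, norm_zero, inv_zero,
      zero_mul, zero_add] <;> positivity
  obtain ⟨h, hh, htaylor⟩ := exists_forall_abs_sub_sub_inner_gradient_le hv hS hκ
  have hnorm : 0 < ‖∇ v x₀‖ := norm_pos_iff.2 h₀
  obtain ⟨y, hy⟩ : ∃ y, y = (min h 1 / ‖∇ v x₀‖) • ∇ v x₀ := ⟨_, rfl⟩
  have hyn : ‖y‖ = min h 1 := by
    rw [hy, norm_smul, Real.norm_of_nonneg (by positivity), div_mul_cancel₀ _ hnorm.ne']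
  have hy₀ : 0 < ‖y‖ := hyn ▸ lt_min hh one_pos
  have hinner : ⟪∇ v x₀, y⟫ = ‖y‖ * ‖∇ v x₀‖ := by
    rw [hyn, hy, real_inner_smul_right, real_inner_self_eq_norm_sq]
    field_simp
  refine ⟨y, hyn.trans_le (min_le_right _ _), fun x hx => ?_, ?_⟩
  · have hupper := (abs_le.1 (htaylor x hx y (hyn.trans_le (min_le_left _ _)))).2
    rw [diffQuotient, inv_mul_le_iff₀ hy₀]
    linarith [real_inner_le_norm (∇ v x) y]
  · have hlower := (abs_le.1 (htaylor x₀ hx₀ y (hyn.trans_le (min_le_left _ _)))).1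
    rw [← sub_le_iff_le_add, diffQuotient, le_inv_mul_iff₀ hy₀]
    linarith

variable [MeasurableSpace E] [BorelSpace E] {p lam k K ε : ℝ}

lemma levelEnergy_le_mul_integral_norm_gradient_rpow {w : E → ℝ} {r : ℝ} (hp : 0 ≤ p)
    (hk : 0 < k) (hw : Continuous w) (hv : ContDiff ℝ 1 v)
    (hK : ∀ x ∈ closedBall (0 : E) r, ‖∇ v x‖ ≤ K)
    (hle : ∀ x ∈ closedBall (0 : E) r, w x ≤ ‖∇ v x‖ + k / 2) :
    levelEnergy w k r ≤
      (K ^ 4 + K ^ 3) / (k / 2) ^ p * ∫ x in closedBall (0 : E) r, ‖∇ v x‖ ^ p := by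
  have hpow : Continuous fun x => ‖∇ v x‖ ^ p :=
    (continuous_gradient hv).norm.rpow_const fun _ => Or.inr hp
  rw [levelEnergy, ← integral_const_mul]
  exact setIntegral_mono_on (integrableOn_excess_pow_add_pow hw)
    ((hpow.continuousOn.integrableOn_compact (isCompact_closedBall 0 r)).const_mul _)
    measurableSet_closedBall fun x hx =>
      excess_pow_add_pow_le hp hk (norm_nonneg _) (hK x hx) (hle x hx)

theorem exists_norm_gradient_le (hE : 1 ≤ finrank ℝ E) (hp : 2 < p) (hlam : p - 1 < lam)
    (hK : 0 < K) (hε : 0 < ε) :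
    ∃ δ > 0, ∀ v : E → ℝ, ContDiff ℝ 1 v → IsWeakSolution p lam v (ball 0 4) →
      (∀ x ∈ ball (0 : E) 4, |v x| ≤ δ) → (∀ x ∈ ball (0 : E) 4, ‖∇ v x‖ ≤ K) →
      ‖∇ v 0‖ ≤ ε := by
  obtain ⟨k, hk, hkε⟩ : ∃ k > 0, 3 * k = ε := ⟨ε / 3, by positivity, by ring⟩
  obtain ⟨A, hA, hdeGiorgi⟩ := exists_isDeGiorgi_diffQuotient (E := E) hp hlam hK.le hk
  obtain ⟨ε₀, hε₀, hbound⟩ := exists_forall_isDeGiorgi_le hE hk hA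
  obtain ⟨C, hC, hcaccioppoli⟩ := exists_integral_norm_gradient_rpow_le (E := E) hp
    (lam := lam) (by linarith) hK
  obtain ⟨M, hM, hMp⟩ : ∃ M > 0, M = (K ^ 4 + K ^ 3) / (k / 2) ^ p := ⟨_, by positivity, rfl⟩
  refine ⟨min 1 (ε₀ / (M * C)), by positivity, fun v hv hW hδ hvK => ?_⟩
  obtain ⟨y, hy, hle, hy₀⟩ := exists_diffQuotient_le_norm_gradient_add (x₀ := 0) (κ := k / 2) hv
    (isCompact_closedBall (0 : E) 2) (mem_closedBall_self (by norm_num)) (by positivity)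
  have hsmall : levelEnergy (diffQuotient y v) k 2 ≤ ε₀ := calc
    levelEnergy (diffQuotient y v) k 2 ≤ M * ∫ x in closedBall (0 : E) 2, ‖∇ v x‖ ^ p :=
      hMp ▸ levelEnergy_le_mul_integral_norm_gradient_rpow (by linarith) hk
        (contDiff_diffQuotient hv).continuous hv
        (fun x hx => hvK x (closedBall_subset_ball (by norm_num) hx)) hle
    _ ≤ M * (C * min 1 (ε₀ / (M * C))) := by
      gcongr
      exact hcaccioppoli _ (min_le_left _ _) v hv hW hδ hvK
    _ ≤ M * (C * (ε₀ / (M * C))) := by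
      gcongr
      exact min_le_right _ _
    _ = ε₀ := by field_simp
  have := hbound _ (contDiff_diffQuotient hv) (hdeGiorgi v hv hW
    (fun x hx => (hδ x hx).trans (min_le_left _ _)) hvK y hy hle) hsmall
  linarith

end GradientSmallness

section PointSelection

lemma exists_forall_mem_ball_le_two_mul {X : Type*} [MetricSpace X] [ProperSpace X] {M : X → ℝ}
    {x₀ : X} {R : ℝ} (hM : Continuous M) (hM₀ : ∀ x, 0 ≤ M x) (hR : 0 < R) (hx₀ : 0 < M x₀) :
    ∃ y, ∃ r > 0, ball y r ⊆ ball x₀ R ∧ R * M x₀ ≤ 2 * r * M y ∧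
      ∀ x ∈ ball y r, M x ≤ 2 * M y := by
  obtain ⟨y, -, hmax⟩ := (isCompact_closedBall x₀ R).exists_isMaxOn
    ⟨x₀, mem_closedBall_self hR.le⟩ (f := fun x => (R - dist x x₀) * M x) (by fun_prop)
  rw [isMaxOn_iff] at hmax
  have hle := hmax x₀ (mem_closedBall_self hR.le)
  rw [dist_self, sub_zero] at hle
  have hdist : 0 < R - dist y x₀ := pos_of_mul_pos_left ((mul_pos hR hx₀).trans_le hle) (hM₀ y)
  obtain ⟨r, hr⟩ : ∃ r, 2 * r = R - dist y x₀ := ⟨(R - dist y x₀) / 2, by ring⟩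
  have hr₀ : 0 < r := by linarith
  refine ⟨y, r, hr₀, ball_subset_ball' (by linarith), hr ▸ hle, fun x hx => ?_⟩
  have hxy := mem_ball.1 hx
  have htri := dist_triangle x y x₀
  have hscaled : r * M x ≤ r * (2 * M y) := calc
    r * M x ≤ (R - dist x x₀) * M x := mul_le_mul_of_nonneg_right (by linarith) (hM₀ x)
    _ ≤ (R - dist y x₀) * M y := hmax x (by rw [mem_closedBall]; linarith)
    _ = r * (2 * M y) := by rw [← hr]; ring
  exact le_of_mul_le_mul_left hscaled hr₀

end PointSelection

section FrontierDistance

variable {E : Type*} [NormedAddCommGroup E] [NormedSpace ℝ E] {Ω : Set E} {x : E}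

lemma ball_infDist_frontier_subset (hΩ : IsOpen Ω) (hx : x ∈ Ω) :
    ball x (infDist x (frontier Ω)) ⊆ Ω := by
  rcases (ball x (infDist x (frontier Ω))).eq_empty_or_nonempty with hempty | hne
  · exact hempty ▸ empty_subset _
  · refine (convex_ball x _).isPreconnected.subset_of_closure_inter_subset hΩ
      ⟨x, mem_ball_self (nonempty_ball.1 hne), hx⟩ fun z ⟨hz, hzball⟩ => ?_
    by_contra hzΩ
    exact disjoint_left.1 disjoint_ball_infDist hzball ⟨hz, fun h => hzΩ (interior_subset h)⟩

lemma infDist_frontier_pos (hΩ : IsOpen Ω) (hne : Ω ≠ univ) (hx : x ∈ Ω) :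
    0 < infDist x (frontier Ω) :=
  (isClosed_frontier.notMem_iff_infDist_pos (nonempty_frontier_iff.2 ⟨⟨x, hx⟩, hne⟩)).1
    fun hfr => (hΩ.frontier_eq ▸ hfr).2 hx

end FrontierDistance

section ScaledSize

variable {E : Type*} [NormedAddCommGroup E] [InnerProductSpace ℝ E] [CompleteSpace E]
  {w : E → ℝ} {x y : E} {a s t : ℝ}

/-- The local size of `w` measured in units of inverse length: a rescaling by `s` multiplies it
by `s`. -/
noncomputable def scaledSize (a : ℝ) (w : E → ℝ) (x : E) : ℝ :=
  |w x| ^ (1 / a) + ‖∇ w x‖ ^ (1 / (a + 1))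

lemma scaledSize_nonneg : 0 ≤ scaledSize a w x := by
  unfold scaledSize
  positivity

lemma continuous_scaledSize (ha : 0 < a) (hw : ContDiff ℝ 1 w) : Continuous (scaledSize a w) :=
  (hw.continuous.abs.rpow_const fun _ => Or.inr (by positivity)).add
    ((continuous_gradient hw).norm.rpow_const fun _ => Or.inr (by positivity))

lemma scaledSize_rescale (ha : 0 < a) (hs : 0 < s) (hw : Differentiable ℝ w) :
    scaledSize a (rescale a s y w) x = s * scaledSize a w (y + s • x) := by
  rw [scaledSize, norm_gradient_rescale_rpow hs hw, rescale, abs_mul,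
    abs_of_pos (Real.rpow_pos_of_pos hs a), Real.mul_rpow (by positivity) (abs_nonneg _),
    ← Real.rpow_mul hs.le, mul_one_div_cancel ha.ne', mul_one_div_cancel (by positivity),
    Real.rpow_one, scaledSize, mul_add]

lemma abs_le_of_scaledSize_le (ha : 0 < a) (h : scaledSize a w x ≤ t) : |w x| ≤ t ^ a := by
  have hgrad : 0 ≤ ‖∇ w x‖ ^ (1 / (a + 1)) := by positivity
  have hroot : |w x| ^ a⁻¹ ≤ t := by
    rw [← one_div]
    exact (le_add_of_nonneg_right hgrad).trans h
  exact (Real.rpow_inv_le_iff_of_pos (abs_nonneg _) (scaledSize_nonneg.trans h) ha).1 hroot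

lemma norm_gradient_le_of_scaledSize_le (ha : 0 < a) (h : scaledSize a w x ≤ t) :
    ‖∇ w x‖ ≤ t ^ (a + 1) := by
  have habs : 0 ≤ |w x| ^ (1 / a) := by positivity
  have hroot : ‖∇ w x‖ ^ (a + 1)⁻¹ ≤ t := by
    rw [← one_div]
    exact (le_add_of_nonneg_left habs).trans h
  exact (Real.rpow_inv_le_iff_of_pos (norm_nonneg _) (scaledSize_nonneg.trans h)
    (by positivity)).1 hroot

lemma scaledSize_le_two_mul (ha : 0 < a) (ht : 0 ≤ t) (hw : |w x| ≤ t ^ a)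
    (hgrad : ‖∇ w x‖ ≤ t ^ (a + 1)) : scaledSize a w x ≤ 2 * t := by
  rw [scaledSize, two_mul, one_div, one_div]
  exact add_le_add ((Real.rpow_inv_le_iff_of_pos (abs_nonneg _) ht ha).2 hw)
    ((Real.rpow_inv_le_iff_of_pos (norm_nonneg _) ht (by positivity)).2 hgrad)

lemma abs_add_norm_gradient_rpow_le (ha : 0 < a) (h : scaledSize a w x ≤ t) :
    |w x| + ‖∇ w x‖ ^ (a / (a + 1)) ≤ 2 * t ^ a := by
  have ht : 0 ≤ t := scaledSize_nonneg.trans h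
  have hgrad : ‖∇ w x‖ ^ (a / (a + 1)) ≤ t ^ a := calc
    ‖∇ w x‖ ^ (a / (a + 1)) ≤ (t ^ (a + 1)) ^ (a / (a + 1)) := by
      gcongr
      exact norm_gradient_le_of_scaledSize_le ha h
    _ = t ^ a := by rw [← Real.rpow_mul ht, mul_div_cancel₀ a (by positivity)]
  linarith [abs_le_of_scaledSize_le ha h]

end ScaledSize

section UniversalBound

variable {E : Type*} [NormedAddCommGroup E] [InnerProductSpace ℝ E] [FiniteDimensional ℝ E]
  [MeasurableSpace E] [BorelSpace E] {a p lam : ℝ}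

theorem exists_radius_scaledSize_lt_one (hE : 1 ≤ finrank ℝ E) (hp : 2 < p) (hlam : p - 1 < lam)
    (hlam' : p * (p + 3) / (p - 1) < finrank ℝ E → lam < LambdaC (finrank ℝ E) p) (ha : 0 < a) :
    ∃ R₀ > 0, ∀ v : E → ℝ, IsStableSolution p lam v (ball 0 R₀) →
      (∀ x ∈ ball (0 : E) R₀, scaledSize a v x ≤ 2) → scaledSize a v 0 < 1 := by
  obtain ⟨γ, hγ, hcond, hdim⟩ := exists_lt_cutoffExponent hp hlam hE hlam'
  obtain ⟨δ, hδ, hgradient⟩ := exists_norm_gradient_le hE hp hlam (K := 2 ^ (a + 1))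
    (ε := (1 / 3) ^ (a + 1)) (by positivity) (by positivity)
  obtain ⟨R₀, hR₀, habs⟩ := exists_radius_abs_le hp hlam hγ hcond hdim (K := 2 ^ (a + 1))
    (δ := min δ ((1 / 3) ^ a)) (by positivity) (by positivity)
  refine ⟨R₀, by linarith, fun v hv hsize => ?_⟩
  have hball : ball (0 : E) 4 ⊆ ball 0 R₀ := ball_subset_ball hR₀.le
  have hK := fun x hx => norm_gradient_le_of_scaledSize_le ha (hsize x hx)
  have hsmall := habs v hv hK
  have hv₀ : |v 0| ≤ (1 / 3) ^ a :=
    (hsmall 0 (mem_ball_self (by norm_num))).trans (min_le_right _ _)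
  have hgrad₀ : ‖∇ v 0‖ ≤ (1 / 3) ^ (a + 1) :=
    hgradient v hv.contDiff (hv.mono hball).isWeakSolution
      (fun x hx => (hsmall x hx).trans (min_le_left _ _)) fun x hx => hK x (hball hx)
  linarith [scaledSize_le_two_mul ha (by norm_num) hv₀ hgrad₀]

theorem exists_forall_mul_scaledSize_le (hE : 1 ≤ finrank ℝ E) (hp : 2 < p) (hlam : p - 1 < lam)
    (hlam' : p * (p + 3) / (p - 1) < finrank ℝ E → lam < LambdaC (finrank ℝ E) p) (ha : 0 < a)
    (hscale : a * (lam + 1 - p) = p) :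
    ∃ R₁ > 0, ∀ (w : E → ℝ) (x₀ : E) (R : ℝ), 0 < R → IsStableSolution p lam w (ball x₀ R) →
      R * scaledSize a w x₀ ≤ R₁ := by
  obtain ⟨R₀, hR₀, hlt⟩ := exists_radius_scaledSize_lt_one hE hp hlam hlam' ha
  refine ⟨2 * R₀, by positivity, fun w x₀ R hR hw => ?_⟩
  by_contra! hlarge
  have hx₀ : 0 < scaledSize a w x₀ :=
    pos_of_mul_pos_right ((by positivity : 0 < 2 * R₀).trans hlarge) hR.le
  obtain ⟨y, r, hr, hball, hle, hdouble⟩ := exists_forall_mem_ball_le_two_mul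
    (continuous_scaledSize ha hw.contDiff) (fun _ => scaledSize_nonneg) hR hx₀
  obtain ⟨m, hm⟩ : ∃ m, m = scaledSize a w y := ⟨_, rfl⟩
  rw [← hm] at hle hdouble
  have hrm : R₀ < r * m := by linarith
  have hm₀ : 0 < m := pos_of_mul_pos_right (hR₀.trans hrm) hr.le
  have hmem : ∀ x ∈ ball (0 : E) R₀, y + m⁻¹ • x ∈ ball y r := fun x hx => by
    rw [mem_ball_zero_iff] at hx
    rw [mem_ball, dist_self_add_left, norm_smul, Real.norm_of_nonneg (by positivity),
      inv_mul_lt_iff₀ hm₀]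
    linarith
  have hsize : ∀ x, scaledSize a (rescale a m⁻¹ y w) x = m⁻¹ * scaledSize a w (y + m⁻¹ • x) :=
    fun x => scaledSize_rescale ha (by positivity) (hw.contDiff.differentiable one_ne_zero)
  have hlt_one := hlt (rescale a m⁻¹ y w)
    (hw.rescale hscale (by positivity) fun x hx => hball (hmem x hx)) fun x hx => by
      rw [hsize, inv_mul_le_iff₀ hm₀, mul_comm m]
      exact hdouble _ (hmem x hx)
  rw [hsize, smul_zero, add_zero, ← hm, inv_mul_cancel₀ hm₀.ne'] at hlt_one
  exact lt_irrefl 1 hlt_one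

end UniversalBound

end PLaplace

open PLaplace Module in
theorem singularity_estimate_stable_general {E : Type*} [NormedAddCommGroup E]
    [InnerProductSpace ℝ E] [FiniteDimensional ℝ E] [MeasurableSpace E] [BorelSpace E] {p lam : ℝ}
    (hp : 2 < p) (hlam₁ : p - 1 < lam)
    (hlam₂ : p * (p + 3) / (p - 1) < finrank ℝ E → lam < LambdaC (finrank ℝ E) p) :
    ∃ C > 0, ∀ Ω : Set E, IsOpen Ω → Ω ≠ Set.univ → ∀ u : E → ℝ, ContDiffOn ℝ 1 u Ω →
      IsWeakSolution p lam u Ω → IsStable p lam u Ω → ∀ x ∈ Ω,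
        |u x| + ‖gradient u x‖ ^ (p / (lam + 1)) ≤
          C * infDist x (frontier Ω) ^ (-(p / (lam + 1 - p))) := by
  rcases Nat.eq_zero_or_pos (finrank ℝ E) with hdim | hdim
  · have := finrank_zero_iff.1 hdim
    exact ⟨1, one_pos, fun Ω _ hne _ _ _ _ x hx =>
      absurd (Set.eq_univ_of_forall fun y => Subsingleton.elim x y ▸ hx) hne⟩
  have hden : 0 < lam + 1 - p := by linarith
  have hlam : 0 < lam + 1 := by linarith
  obtain ⟨a, ha⟩ : ∃ a, a = p / (lam + 1 - p) := ⟨_, rfl⟩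
  have ha₀ : 0 < a := ha ▸ div_pos (by linarith) hden
  have hexp : p / (lam + 1) = a / (a + 1) := by rw [ha]; field_simp; ring
  obtain ⟨R₁, hR₁, hbound⟩ := exists_forall_mul_scaledSize_le hdim hp hlam₁ hlam₂ ha₀
    (by rw [ha, div_mul_cancel₀ _ hden.ne'])
  refine ⟨2 * (2 * R₁) ^ a, by positivity, fun Ω hΩ hne u hu hW hS x hx => ?_⟩
  have hd := infDist_frontier_pos hΩ hne hx
  obtain ⟨w, hw, hwx, hgrad⟩ := exists_isStableSolution_eq_near hΩ (half_pos hd)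
    ((mul_div_cancel₀ (infDist x (frontier Ω)) two_ne_zero).symm ▸
      ball_infDist_frontier_subset hΩ hx) hu hW hS
  have hsize : scaledSize a w x ≤ 2 * R₁ / infDist x (frontier Ω) := by
    rw [le_div_iff₀ hd]
    linarith [hbound w x _ (half_pos hd) hw]
  have hsum := abs_add_norm_gradient_rpow_le ha₀ hsize
  rw [hwx, hgrad, ← hexp] at hsum
  refine hsum.trans_eq ?_
  rw [← ha, Real.div_rpow (by positivity) hd.le, Real.rpow_neg hd.le, div_eq_mul_inv, mul_assoc]

/-- **Theorem 2.2.** Let `p > 2` and `Ω ≠ ℝ^N` a domain; assume `p - 1 < λ`, and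
`λ < Λ_c(N, p)` in case `N > p(p+3)/(p-1)`. Then there is `C = C(p, N, λ) > 0`
(independent of `Ω` and `u`) such that any stable `C¹` weak solution `u` of
`-Δ_p u = |u|^{λ-1} u` on `Ω` satisfies
`|u(x)| + |∇u(x)|^{p/(λ+1)} ≤ C ⬝ dist(x, ∂Ω)^{-p/(λ+1-p)}` for all `x ∈ Ω`. -/
theorem singularity_estimate_stable
    (N : ℕ) (p lam : ℝ) (hp : 2 < p)
    (hlam₁ : p - 1 < lam)
    (hlam₂ : (N : ℝ) > p * (p + 3) / (p - 1) → lam < LambdaC N p) :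
    ∃ C : ℝ, 0 < C ∧
      ∀ Ω : Set (EuclideanSpace ℝ (Fin N)),
        IsOpen Ω → IsConnected Ω → Ω ≠ Set.univ →
        ∀ u : EuclideanSpace ℝ (Fin N) → ℝ, ContDiffOn ℝ 1 u Ω →
          -- `u` is a weak solution of `-Δ_p u = |u|^{λ-1} u` on `Ω`
          (∀ φ : EuclideanSpace ℝ (Fin N) → ℝ,
            ContDiff ℝ (⊤ : ℕ∞) φ → HasCompactSupport φ → tsupport φ ⊆ Ω →
            ∫ x in Ω, ‖gradient u x‖ ^ (p - 2) * ⟪gradient u x, gradient φ x⟫ =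
              ∫ x in Ω, |u x| ^ (lam - 1) * u x * φ x) →
          -- `u` is stable: `L_u(φ, φ) ≥ 0` for all `φ ∈ C_c^1(Ω)`
          (∀ φ : EuclideanSpace ℝ (Fin N) → ℝ,
            ContDiff ℝ 1 φ → HasCompactSupport φ → tsupport φ ⊆ Ω →
            0 ≤ ∫ x in Ω,
              (‖gradient u x‖ ^ (p - 2) * ‖gradient φ x‖ ^ 2 +
                ((p - 2) * ‖gradient u x‖ ^ (p - 4) * ⟪gradient u x, gradient φ x⟫ ^ 2 -
                  lam * |u x| ^ (lam - 1) * φ x ^ 2))) →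
          ∀ x ∈ Ω,
            |u x| + ‖gradient u x‖ ^ (p / (lam + 1)) ≤
              C * infDist x (frontier Ω) ^ (-(p / (lam + 1 - p))) := by
  obtain ⟨C, hC, hbound⟩ := singularity_estimate_stable_general (E := EuclideanSpace ℝ (Fin N))
    hp hlam₁ (by rwa [finrank_euclideanSpace_fin])
  exact ⟨C, hC, fun Ω hΩ _ hne u hu hW hS => hbound Ω hΩ hne u hu hW hS⟩
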